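/- arXiv:0912.0875 — 2 statements merged into one kernel-verified Lean document; each statement's English description precedes it below -/
import Mathlib

section
/- Let G be a finite group and let N be a nonsolvable normal subgroup of G. Then T(G) ≥ 6·T(G/N), where T(H) denotes the sum of the degrees of the complex irreducible characters of a finite group H. -/
/-- `χ : G → ℂ` is an irreducible complex character of the group `G`, i.e. the character
of a simple (irreducible) finite-dimensional complex representation of `G`. -/
def IsIrrChar (G : Type) [Group G] (χ : G → ℂ) : Prop :=
  ∃ V : FDRep ℂ G, CategoryTheory.Simple V ∧ χ = V.character

/-- `T(G)`: the sum of the degrees (values at the identity) of the complex irreducible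
characters of `G`. -/
noncomputable def charDegreeSum (G : Type) [Group G] : ℝ :=
  ∑ᶠ χ ∈ {χ : G → ℂ | IsIrrChar G χ}, (χ 1).re

/-!
Let `G` act by conjugation on the Sylow `p`-subgroups of `N`, supposed to be more than one, and let
`θ` be the permutation character minus `1`. As `N` is transitive, `[θ_N, 1_N] = 0`. A Sylow
`p`-subgroup of `N` fixes only itself, so all its other orbits have at least `p` points, and
counting the orbits of `N` on pairs gives `p [θ_N, θ_N] ≤ θ(1)`. For `χ ∈ Irr(G/N)`, this bound
passes from `θ` to `χθ`, both of its sides being multiplied by `χ(1)`, and hence, being additive, to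
some irreducible constituent `ψ` of `χθ`: `p [θ_N, ψ_N] ≤ ψ(1)`. Since `[θ_N, ψ_N] > 0`, this `ψ` is
not inflated from `G/N`. By the decomposition of the regular character of `G/N`, the `χ` sent to a
given `ψ` satisfy `∑ χ(1) ≤ ∑_{χ ∈ Irr(G/N)} χ(1) [χθ, ψ] = [θ_N, ψ_N] ≤ ψ(1) / p`, whence
`(1 + p) T(G/N) ≤ T(G)`.

A nonsolvable `N` has several Sylow `p`-subgroups for some prime `p ≥ 5`: otherwise, quotients by
normal Sylow subgroups reduce `N` to a `{2, 3}`-group, which is solvable by Burnside's theorem.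
-/

open scoped Finset

/-! ### Irreducible characters -/

section IrreducibleCharacters

/-- The pairing `|G|⁻¹ ∑ g, a g * b g⁻¹` of functions on a finite group. Having `b g⁻¹` in place of
`conj (b g)`, which agrees with it when `b` is a character, makes the pairing bilinear. -/
noncomputable def charInner (G : Type*) [Group G] [Finite G] : LinearMap.BilinForm ℂ (G → ℂ) :=
  letI := Fintype.ofFinite G
  LinearMap.mk₂ ℂ (fun a b ↦ (Nat.card G : ℂ)⁻¹ * ∑ g, a g * b g⁻¹)
    (fun a a' b ↦ by simp [add_mul, Finset.sum_add_distrib, mul_add])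
    (fun c a b ↦ by simp [mul_assoc, Finset.mul_sum, mul_left_comm])
    (fun a b b' ↦ by simp [Finset.sum_add_distrib, mul_add])
    (fun c a b ↦ by simp [Finset.mul_sum, mul_left_comm])

lemma charInner_apply {G : Type*} [Group G] [Fintype G] (a b : G → ℂ) :
    charInner G a b = (Nat.card G : ℂ)⁻¹ * ∑ g, a g * b g⁻¹ := by
  simp only [charInner, LinearMap.mk₂_apply]
  congr!

lemma charInner_comm {G : Type*} [Group G] [Finite G] (a b : G → ℂ) :
    charInner G a b = charInner G b a := by
  have := Fintype.ofFinite G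
  rw [charInner_apply, charInner_apply, ← Equiv.sum_comp (Equiv.inv G)]
  simp [mul_comm]

variable {G : Type} [Group G] [Finite G] {χ ψ : G → ℂ}

lemma simple_iff_charInner_self_eq_one (V : FDRep ℂ G) :
    CategoryTheory.Simple V ↔ charInner G V.character V.character = 1 := by
  have := Fintype.ofFinite G
  rw [FDRep.simple_iff_char_is_norm_one, charInner_apply, inv_mul_eq_one₀ (NeZero.ne _), eq_comm]

lemma isIrrChar_of_charInner_self (V : FDRep ℂ G)
    (h : charInner G V.character V.character = 1) : IsIrrChar G V.character :=
  ⟨V, (simple_iff_charInner_self_eq_one V).2 h, rfl⟩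

namespace IsIrrChar

lemma charInner_self (hχ : IsIrrChar G χ) : charInner G χ χ = 1 := by
  obtain ⟨V, hV, rfl⟩ := hχ
  exact (simple_iff_charInner_self_eq_one V).1 hV

lemma charInner_eq_zero (hχ : IsIrrChar G χ) (hψ : IsIrrChar G ψ) (hne : χ ≠ ψ) :
    charInner G χ ψ = 0 := by
  have := Fintype.ofFinite G
  have := invertibleOfNonzero (NeZero.ne (Nat.card G : ℂ))
  obtain ⟨V, hV, rfl⟩ := hχ
  obtain ⟨W, hW, rfl⟩ := hψ
  rw [charInner_apply, FDRep.char_orthonormal V W, if_neg]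
  rintro ⟨i⟩
  exact hne (FDRep.char_iso i)

lemma exists_degree_eq (hχ : IsIrrChar G χ) : ∃ n : ℕ, 0 < n ∧ χ 1 = n := by
  have hself := hχ.charInner_self
  obtain ⟨V, -, rfl⟩ := hχ
  refine ⟨Module.finrank ℂ V, Nat.pos_of_ne_zero fun h0 ↦ ?_, FDRep.char_one V⟩
  have : Subsingleton V := Module.finrank_zero_iff.1 h0
  have hzero : V.character = 0 := by
    ext g
    simp [FDRep.character, Subsingleton.elim (V.ρ g) 0]
  simp [hzero] at hself

lemma ofReal_degree_re (hχ : IsIrrChar G χ) : ((χ 1).re : ℂ) = χ 1 := by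
  obtain ⟨n, -, hn⟩ := hχ.exists_degree_eq
  simp [hn]

lemma degree_re_pos (hχ : IsIrrChar G χ) : 0 < (χ 1).re := by
  obtain ⟨n, hpos, hn⟩ := hχ.exists_degree_eq
  simpa [hn] using hpos

lemma degree_ne_zero (hχ : IsIrrChar G χ) : χ 1 ≠ 0 := by
  obtain ⟨n, hpos, hn⟩ := hχ.exists_degree_eq
  exact hn ▸ Nat.cast_ne_zero.2 hpos.ne'

end IsIrrChar

variable (G) in
lemma finite_setOf_isIrrChar : {χ : G → ℂ | IsIrrChar G χ}.Finite := by
  have hindep : LinearIndependent ℂ (fun χ : {χ : G → ℂ | IsIrrChar G χ} ↦ (χ : G → ℂ)) := by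
    refine LinearMap.BilinForm.linearIndependent_of_iIsOrtho (B := charInner G) ?_ ?_
    · exact fun χ ψ hne ↦ χ.2.charInner_eq_zero ψ.2 (Subtype.coe_injective.ne hne)
    · exact fun χ h ↦ one_ne_zero (χ.2.charInner_self.symm.trans h)
  exact hindep.setFinite

variable (G) in
/-- `Irr(G)`, as a finite set of functions on `G`. -/
noncomputable def irrChars : Finset (G → ℂ) := (finite_setOf_isIrrChar G).toFinset

@[simp]
lemma mem_irrChars : χ ∈ irrChars G ↔ IsIrrChar G χ := by simp [irrChars]

variable (G) in
lemma charDegreeSum_eq_sum : charDegreeSum G = ∑ χ ∈ irrChars G, (χ 1).re :=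
  finsum_mem_eq_finite_toFinset_sum _ _

variable (G) in
lemma charDegreeSum_nonneg : 0 ≤ charDegreeSum G := by
  rw [charDegreeSum_eq_sum]
  exact Finset.sum_nonneg fun χ hχ ↦ (mem_irrChars.1 hχ).degree_re_pos.le

end IrreducibleCharacters

/-! ### The semiring of characters -/

section Characters

variable {G : Type} [Group G]

variable (G) in
/-- The characters of `G`, as the sums of irreducible ones; by Maschke's theorem, they contain the
character of every finite-dimensional complex representation (`character_mem_characters`). -/
def characters : AddSubmonoid (G → ℂ) := AddSubmonoid.closure {χ | IsIrrChar G χ}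

lemma IsIrrChar.mem_characters {χ : G → ℂ} (hχ : IsIrrChar G χ) : χ ∈ characters G :=
  AddSubmonoid.subset_closure hχ

section Representations

lemma character_eq_add_of_isCompl {k G V : Type*} [Field k] [Group G] [AddCommGroup V] [Module k V]
    [FiniteDimensional k V] (ρ : Representation k G V) {σ τ : Subrepresentation ρ}
    (h : IsCompl σ τ) :
    ρ.character = σ.toRepresentation.character + τ.toRepresentation.character := by
  have h' : IsCompl σ.toSubmodule τ.toSubmodule := by
    rw [isCompl_iff, disjoint_iff, codisjoint_iff, ← Subrepresentation.toSubmodule_inf,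
      ← Subrepresentation.toSubmodule_sup, h.inf_eq_bot, h.sup_eq_top]
    exact ⟨rfl, rfl⟩
  let e := Submodule.prodEquivOfIsCompl _ _ h'
  ext g
  have hconj : e.conj ((σ.toRepresentation g).prodMap (τ.toRepresentation g)) = ρ g := by
    refine LinearMap.ext fun v ↦ ?_
    obtain ⟨⟨u, w⟩, rfl⟩ := e.surjective v
    simp [e, LinearEquiv.conj_apply_apply, Submodule.coe_prodEquivOfIsCompl',
      Subrepresentation.toRepresentation]
  simp only [Representation.character, Pi.add_apply]
  rw [← LinearMap.trace_prodMap', ← LinearMap.trace_conj' _ e, hconj]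

lemma exists_isCompl_ne_top_of_not_isIrreducible {k G V : Type*} [Field k] [Group G] [Finite G]
    [NeZero (Nat.card G : k)] [AddCommGroup V] [Module k V] [Nontrivial V]
    (ρ : Representation k G V) (h : ¬ ρ.IsIrreducible) :
    ∃ σ τ : Subrepresentation ρ, IsCompl σ τ ∧ σ ≠ ⊤ ∧ τ ≠ ⊤ := by
  have : Nontrivial (Subrepresentation ρ) :=
    ⟨⊥, ⊤, fun h ↦ bot_ne_top (α := Submodule k V) (congrArg Subrepresentation.toSubmodule h)⟩
  obtain ⟨σ, hbot, htop⟩ : ∃ σ : Subrepresentation ρ, σ ≠ ⊥ ∧ σ ≠ ⊤ := by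
    by_contra! hσ
    exact h ⟨fun σ ↦ or_iff_not_imp_left.2 (hσ σ)⟩
  obtain ⟨τ, hτ⟩ := exists_isCompl σ
  exact ⟨σ, τ, hτ, htop, fun h ↦ hbot (by simpa [h] using hτ.inf_eq_bot)⟩

variable [Finite G] {V : Type} [AddCommGroup V] [Module ℂ V] [FiniteDimensional ℂ V]
  (ρ : Representation ℂ G V)

lemma isIrrChar_character [ρ.IsIrreducible] : IsIrrChar G ρ.character := by
  have := Fintype.ofFinite G
  have := invertibleOfNonzero (NeZero.ne (Nat.card G : ℂ))
  refine isIrrChar_of_charInner_self (FDRep.of ρ) ?_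
  have h := Representation.card_inv_mul_sum_char_mul_char_eq_finrank ρ ρ
  rw [Representation.IsIrreducible.finrank_intertwiningMap_self, Nat.cast_one] at h
  rwa [charInner_apply]

lemma character_mem_characters : ρ.character ∈ characters G := by
  induction hn : Module.finrank ℂ V using Nat.strong_induction_on generalizing V with
  | _ n ih =>
    by_cases hirr : ρ.IsIrreducible
    · exact (isIrrChar_character ρ).mem_characters
    rcases subsingleton_or_nontrivial V with hV | hV
    · convert! zero_mem (characters G)
      ext g
      simp [Representation.character, Subsingleton.elim (ρ g) 0]
    · obtain ⟨σ, τ, hcompl, hσ, hτ⟩ := exists_isCompl_ne_top_of_not_isIrreducible ρ hirr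
      have hlt (υ : Subrepresentation ρ) (hυ : υ ≠ ⊤) :
          Module.finrank ℂ υ.toSubmodule < n :=
        hn ▸ Submodule.finrank_lt fun h ↦ hυ (Subrepresentation.toSubmodule_injective h)
      rw [character_eq_add_of_isCompl ρ hcompl]
      exact add_mem (ih _ (hlt σ hσ) _ rfl) (ih _ (hlt τ hτ) _ rfl)

end Representations

variable [Finite G] {a b χ : G → ℂ}

lemma mul_mem_characters (ha : a ∈ characters G) (hb : b ∈ characters G) :
    a * b ∈ characters G := by
  induction ha using AddSubmonoid.closure_induction with
  | zero => simp
  | add x y _ _ hx hy => exact add_mul x y b ▸ add_mem hx hy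
  | mem x hx =>
    induction hb using AddSubmonoid.closure_induction with
    | zero => simp
    | add y z _ _ hy hz => exact mul_add x y z ▸ add_mem hy hz
    | mem y hy =>
      obtain ⟨V, -, rfl⟩ := hx
      obtain ⟨W, -, rfl⟩ := hy
      have h := character_mem_characters
        (Representation.tprod (V.ρ : Representation ℂ G V) (W.ρ : Representation ℂ G W))
      rwa [Representation.char_tensor] at h

lemma isIrrChar_one : IsIrrChar G 1 := by
  have := Fintype.ofFinite G
  have hchar : (FDRep.of (Representation.trivial ℂ G ℂ)).character = 1 := by
    ext g
    simp [FDRep.character]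
  rw [← hchar]
  refine isIrrChar_of_charInner_self _ ?_
  simp [hchar, charInner_apply]

lemma exists_charInner_eq_natCast (ha : a ∈ characters G) (hχ : IsIrrChar G χ) :
    ∃ n : ℕ, charInner G a χ = n := by
  induction ha using AddSubmonoid.closure_induction with
  | zero => exact ⟨0, by simp⟩
  | add x y _ _ hx hy =>
    obtain ⟨m, hm⟩ := hx
    obtain ⟨n, hn⟩ := hy
    exact ⟨m + n, by simp [hm, hn]⟩
  | mem ψ hψ =>
    by_cases h : ψ = χ
    · exact ⟨1, by simp [h, hχ.charInner_self]⟩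
    · exact ⟨0, by simp [hψ.charInner_eq_zero hχ h]⟩

lemma one_le_charInner_re (ha : a ∈ characters G) (hχ : IsIrrChar G χ)
    (h : charInner G a χ ≠ 0) : 1 ≤ (charInner G a χ).re := by
  obtain ⟨n, hn⟩ := exists_charInner_eq_natCast ha hχ
  rw [hn, Nat.cast_ne_zero] at h
  rw [hn, Complex.natCast_re]
  exact_mod_cast Nat.one_le_iff_ne_zero.2 h

lemma sum_charInner_smul (ha : a ∈ characters G) :
    ∑ χ ∈ irrChars G, charInner G a χ • χ = a := by
  induction ha using AddSubmonoid.closure_induction with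
  | zero => simp
  | add x y _ _ hx hy => simp [add_smul, Finset.sum_add_distrib, hx, hy]
  | mem ψ hψ =>
    rw [Finset.sum_eq_single_of_mem ψ (mem_irrChars.2 hψ), hψ.charInner_self, one_smul]
    intro χ hχ hne
    rw [hψ.charInner_eq_zero (mem_irrChars.1 hχ) hne.symm, zero_smul]

lemma sub_mem_characters_of_charInner_ne_zero (ha : a ∈ characters G) (hχ : IsIrrChar G χ)
    (h : charInner G a χ ≠ 0) : a - χ ∈ characters G := by
  induction ha using AddSubmonoid.closure_induction with
  | zero => simp at h
  | mem ψ hψ =>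
    obtain rfl : ψ = χ := by_contra fun hne ↦ h (hψ.charInner_eq_zero hχ hne)
    simp
  | add x y hxmem hymem hx hy =>
    by_cases hx0 : charInner G x χ = 0
    · have hy0 : charInner G y χ ≠ 0 := by simpa [hx0] using h
      exact add_sub_assoc x y χ ▸ add_mem hxmem (hy hy0)
    · exact add_sub_right_comm x y χ ▸ add_mem (hx hx0) hymem

lemma exists_constituent_nonneg (ha : a ∈ characters G) (ha0 : a ≠ 0) (L : (G → ℂ) →+ ℝ)
    (hL : 0 ≤ L a) : ∃ ψ, IsIrrChar G ψ ∧ charInner G a ψ ≠ 0 ∧ 0 ≤ L ψ := by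
  have hLa : L a = ∑ ψ ∈ irrChars G, (charInner G a ψ).re * L ψ := by
    conv_lhs => rw [← sum_charInner_smul ha, map_sum]
    refine Finset.sum_congr rfl fun ψ hψ ↦ ?_
    obtain ⟨n, hn⟩ := exists_charInner_eq_natCast ha (mem_irrChars.1 hψ)
    rw [hn, Nat.cast_smul_eq_nsmul, map_nsmul, nsmul_eq_mul, Complex.natCast_re]
  obtain ⟨ψ₀, hψ₀, hne⟩ : ∃ ψ ∈ irrChars G, charInner G a ψ • ψ ≠ 0 :=
    Finset.exists_ne_zero_of_sum_ne_zero (by rwa [sum_charInner_smul ha])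
  by_contra! hneg
  have hterm {ψ : G → ℂ} (hψ : ψ ∈ irrChars G) (h : charInner G a ψ ≠ 0) :
      (charInner G a ψ).re * L ψ < 0 :=
    mul_neg_of_pos_of_neg
      (one_pos.trans_le (one_le_charInner_re ha (mem_irrChars.1 hψ) h))
      (hneg ψ (mem_irrChars.1 hψ) h)
  refine hL.not_gt (hLa ▸ Finset.sum_neg' (fun ψ hψ ↦ ?_) ⟨ψ₀, hψ₀, hterm hψ₀ fun h ↦ ?_⟩)
  · rcases eq_or_ne (charInner G a ψ) 0 with h | h
    · simp [h]
    · exact (hterm hψ h).le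
  · simp [h] at hne

section PermutationCharacter

/-- The permutation character of `G` on `X`, counting fixed points. -/
noncomputable def permChar (G X : Type*) [Group G] [MulAction G X] (g : G) : ℂ :=
  Nat.card (MulAction.fixedBy X g)

lemma permChar_one (G X : Type*) [Group G] [MulAction G X] : permChar G X 1 = Nat.card X := by
  simp [permChar]

variable (G) in
lemma permChar_mem_characters (X : Type) [Finite X] [MulAction G X] :
    permChar G X ∈ characters G := by
  classical
  have := Fintype.ofFinite X
  let ρ : Representation ℂ G (X → ℂ) :=
    { toFun := fun g ↦ LinearMap.funLeft ℂ ℂ (fun x ↦ g⁻¹ • x)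
      map_one' := by ext; simp [LinearMap.funLeft]
      map_mul' := fun g h ↦ by ext; simp [LinearMap.funLeft, mul_smul] }
  have hdiag (g : G) (x : X) : ρ g (Pi.single x 1) x = if g • x = x then 1 else 0 := by
    change (Pi.single x (1 : ℂ) : X → ℂ) (g⁻¹ • x) = _
    rw [Pi.single_apply, inv_smul_eq_iff]
    simp only [eq_comm]
  have hchar : ρ.character = permChar G X := by
    ext g
    rw [Representation.character, LinearMap.trace_eq_matrix_trace ℂ (Pi.basisFun ℂ X)]
    simp [Matrix.trace, hdiag, permChar, MulAction.fixedBy, Fintype.card_subtype]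
  exact hchar ▸ character_mem_characters ρ

lemma sum_degree_mul_apply [DecidableEq G] (g : G) :
    ∑ χ ∈ irrChars G, χ 1 * χ g = if g = 1 then (Nat.card G : ℂ) else 0 := by
  have hreg : permChar G G = fun g ↦ if g = 1 then (Nat.card G : ℂ) else 0 := by
    ext h
    simp only [permChar, MulAction.fixedBy, smul_eq_mul, mul_eq_right]
    split_ifs with h1 <;> simp [h1]
  have hinner (χ : G → ℂ) : charInner G (permChar G G) χ = χ 1 := by
    have := Fintype.ofFinite G
    simp [charInner_apply, hreg]
  have hexpand := congrFun (sum_charInner_smul (permChar_mem_characters G G)) g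
  simpa only [Finset.sum_apply, Pi.smul_apply, smul_eq_mul, hinner, congrFun hreg g] using hexpand

end PermutationCharacter

end Characters

/-! ### Quotients -/

section Quotients

variable {G : Type} [Group G] [Finite G]

lemma charInner_comp_of_surjective {G Q : Type*} [Group G] [Finite G] [Group Q] [Finite Q]
    {f : G →* Q} (hf : Function.Surjective f) (a b : Q → ℂ) :
    charInner G (a ∘ f) (b ∘ f) = charInner Q a b := by
  classical
  have := Fintype.ofFinite G
  have := Fintype.ofFinite Q
  have hfiber (q : Q) : #{g | f g = q} = #{g | f g = 1} :=
    MonoidHom.card_fiber_eq_of_mem_range f (hf q) (hf 1)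
  have hsum (F : Q → ℂ) : ∑ g, F (f g) = #{g | f g = 1} * ∑ q, F q := by
    rw [← Finset.sum_fiberwise (g := f), Finset.mul_sum]
    refine Finset.sum_congr rfl fun q _ ↦ ?_
    rw [← hfiber q, ← nsmul_eq_mul]
    exact Finset.sum_eq_card_nsmul fun g hg ↦ by rw [(Finset.mem_filter.1 hg).2]
  have hcard : (Nat.card G : ℂ) = #{g | f g = 1} * Nat.card Q := by simpa using hsum 1
  have hne : (#{g | f g = 1} : ℂ) ≠ 0 := left_ne_zero_of_mul (hcard ▸ NeZero.ne (Nat.card G : ℂ))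
  simp only [charInner_apply, Function.comp_apply, map_inv, hsum fun q ↦ a q * b q⁻¹, hcard]
  field_simp

lemma IsIrrChar.comp_of_surjective {Q : Type} [Group Q] [Finite Q] {f : G →* Q}
    (hf : Function.Surjective f) {χ : Q → ℂ} (hχ : IsIrrChar Q χ) : IsIrrChar G (χ ∘ f) := by
  have hself := (charInner_comp_of_surjective hf χ χ).trans hχ.charInner_self
  obtain ⟨V, -, rfl⟩ := hχ
  exact isIrrChar_of_charInner_self (FDRep.of ((V.ρ : Representation ℂ Q V).comp f)) hself

/-- The pairing `charInner` of the restrictions to a subgroup. -/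
noncomputable def resInner (N : Subgroup G) : LinearMap.BilinForm ℂ (G → ℂ) :=
  (charInner N).compl₁₂ (LinearMap.funLeft ℂ ℂ N.subtype) (LinearMap.funLeft ℂ ℂ N.subtype)

lemma resInner_apply (N : Subgroup G) (a b : G → ℂ) :
    resInner N a b = charInner N (fun n ↦ a n) (fun n ↦ b n) := rfl

variable {N : Subgroup G} [N.Normal]

lemma resInner_comp_mk_mul (a b : G → ℂ) (χ : G ⧸ N → ℂ) :
    resInner N a (χ ∘ QuotientGroup.mk' N * b) = χ 1 * resInner N a b := by
  have hrestrict : (fun n : N ↦ (χ ∘ QuotientGroup.mk' N * b) n) = χ 1 • fun n : N ↦ b n := by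
    ext n
    simp [(QuotientGroup.eq_one_iff (n : G)).2 n.2]
  rw [resInner_apply, hrestrict, map_smul, smul_eq_mul, resInner_apply]

lemma sum_degree_mul_charInner (a b : G → ℂ) :
    ∑ χ ∈ irrChars (G ⧸ N), χ 1 * charInner G (χ ∘ QuotientGroup.mk' N * a) b =
      resInner N a b := by
  classical
  have := Fintype.ofFinite G
  have := Fintype.ofFinite N
  calc ∑ χ ∈ irrChars (G ⧸ N), χ 1 * charInner G (χ ∘ QuotientGroup.mk' N * a) b
      = (Nat.card G : ℂ)⁻¹ *
          ∑ g : G, (∑ χ ∈ irrChars (G ⧸ N), χ 1 * χ (g : G ⧸ N)) * (a g * b g⁻¹) := by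
        simp only [charInner_apply, Finset.mul_sum, Finset.sum_mul]
        rw [Finset.sum_comm]
        simp [mul_assoc, mul_left_comm]
    _ = (Nat.card G : ℂ)⁻¹ * ∑ g : G with g ∈ N, Nat.card (G ⧸ N) * (a g * b g⁻¹) := by
        simp only [sum_degree_mul_apply, QuotientGroup.eq_one_iff, ite_mul, zero_mul,
          Finset.sum_filter]
    _ = resInner N a b := by
        rw [Subgroup.card_eq_card_quotient_mul_card_subgroup N,
          Finset.sum_subtype (p := (· ∈ N)) (F := ‹Fintype N›) _ (by simp),
          ← Finset.mul_sum, resInner_apply, charInner_apply]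
        push_cast
        field_simp

variable (N) in
/-- The irreducible characters of `G` inflated from `G ⧸ N`. -/
noncomputable def inflatedIrrChars : Finset (G → ℂ) :=
  (irrChars (G ⧸ N)).map
    ⟨fun χ ↦ χ ∘ QuotientGroup.mk' N, (QuotientGroup.mk'_surjective N).injective_comp_right⟩

variable (N) in
lemma inflatedIrrChars_subset : inflatedIrrChars N ⊆ irrChars G := by
  intro ψ hψ
  obtain ⟨χ, hχ, rfl⟩ := Finset.mem_map.1 hψ
  exact mem_irrChars.2
    ((mem_irrChars.1 hχ).comp_of_surjective (QuotientGroup.mk'_surjective N))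

variable (N) in
lemma sum_degree_inflatedIrrChars :
    ∑ ψ ∈ inflatedIrrChars N, (ψ 1).re = charDegreeSum (G ⧸ N) := by
  rw [inflatedIrrChars, Finset.sum_map, charDegreeSum_eq_sum]
  rfl

variable {θ : G → ℂ} {c : ℝ}

lemma resInner_eq_zero_of_mem_inflatedIrrChars (horth : resInner N θ 1 = 0) {ψ : G → ℂ}
    (hψ : ψ ∈ inflatedIrrChars N) : resInner N θ ψ = 0 := by
  obtain ⟨χ, -, rfl⟩ := Finset.mem_map.1 hψ
  simpa [horth] using resInner_comp_mk_mul θ 1 χ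

lemma sum_degree_le_resInner {S : Finset (G ⧸ N → ℂ)} (hS : S ⊆ irrChars (G ⧸ N))
    (hθ : θ ∈ characters G) {ψ : G → ℂ} (hψ : IsIrrChar G ψ)
    (hSψ : ∀ χ ∈ S, charInner G (χ ∘ QuotientGroup.mk' N * θ) ψ ≠ 0) :
    ∑ χ ∈ S, (χ 1).re ≤ (resInner N θ ψ).re := by
  have hprod {χ : G ⧸ N → ℂ} (hχ : χ ∈ irrChars (G ⧸ N)) :
      χ ∘ QuotientGroup.mk' N * θ ∈ characters G :=
    mul_mem_characters ((mem_irrChars.1 hχ).comp_of_surjective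
      (QuotientGroup.mk'_surjective N)).mem_characters hθ
  have hre {χ : G ⧸ N → ℂ} (hχ : χ ∈ irrChars (G ⧸ N)) (z : ℂ) :
      (χ 1 * z).re = (χ 1).re * z.re := by
    rw [← (mem_irrChars.1 hχ).ofReal_degree_re, Complex.re_ofReal_mul, Complex.ofReal_re]
  rw [← sum_degree_mul_charInner, Complex.re_sum]
  calc ∑ χ ∈ S, (χ 1).re
      ≤ ∑ χ ∈ S, (χ 1 * charInner G (χ ∘ QuotientGroup.mk' N * θ) ψ).re := by
        refine Finset.sum_le_sum fun χ hχ ↦ ?_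
        rw [hre (hS hχ)]
        exact le_mul_of_one_le_right (mem_irrChars.1 (hS hχ)).degree_re_pos.le
          (one_le_charInner_re (hprod (hS hχ)) hψ (hSψ χ hχ))
    _ ≤ ∑ χ ∈ irrChars (G ⧸ N), (χ 1 * charInner G (χ ∘ QuotientGroup.mk' N * θ) ψ).re := by
        refine Finset.sum_le_sum_of_subset_of_nonneg hS fun χ hχ _ ↦ ?_
        obtain ⟨n, hn⟩ := exists_charInner_eq_natCast (hprod hχ) hψ
        rw [hre hχ, hn, Complex.natCast_re]
        exact mul_nonneg (mem_irrChars.1 hχ).degree_re_pos.le n.cast_nonneg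

lemma exists_constituent_resInner_le (hθ : θ ∈ characters G) (hθ1 : θ 1 ≠ 0)
    (hnorm : c * (resInner N θ θ).re ≤ (θ 1).re) {χ : G ⧸ N → ℂ} (hχ : IsIrrChar (G ⧸ N) χ) :
    ∃ ψ, IsIrrChar G ψ ∧ charInner G (χ ∘ QuotientGroup.mk' N * θ) ψ ≠ 0 ∧
      c * (resInner N θ ψ).re ≤ (ψ 1).re := by
  let L : (G → ℂ) →+ ℝ :=
    { toFun := fun φ ↦ (φ 1).re - c * (resInner N θ φ).re
      map_zero' := by simp
      map_add' := fun φ φ' ↦ by simp; ring }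
  have hprod : χ ∘ QuotientGroup.mk' N * θ ∈ characters G :=
    mul_mem_characters (hχ.comp_of_surjective (QuotientGroup.mk'_surjective N)).mem_characters hθ
  have hne : χ ∘ QuotientGroup.mk' N * θ ≠ 0 := fun h ↦ by
    simpa [hθ1, hχ.degree_ne_zero] using congrFun h 1
  have hL : L (χ ∘ QuotientGroup.mk' N * θ) = (χ 1).re * L θ := by
    simp only [L, AddMonoidHom.coe_mk, ZeroHom.coe_mk, resInner_comp_mk_mul, Pi.mul_apply,
      Function.comp_apply, map_one]
    rw [← hχ.ofReal_degree_re, Complex.re_ofReal_mul, Complex.re_ofReal_mul, Complex.ofReal_re]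
    ring
  obtain ⟨ψ, hψ, hψχ, hLψ⟩ := exists_constituent_nonneg hprod hne L
    (hL ▸ mul_nonneg hχ.degree_re_pos.le (sub_nonneg.2 hnorm))
  exact ⟨ψ, hψ, hψχ, sub_nonneg.1 hLψ⟩

theorem one_add_mul_charDegreeSum_quotient_le (hθ : θ ∈ characters G) (hθ1 : θ 1 ≠ 0)
    (horth : resInner N θ 1 = 0) (hc : 0 ≤ c) (hnorm : c * (resInner N θ θ).re ≤ (θ 1).re) :
    (1 + c) * charDegreeSum (G ⧸ N) ≤ charDegreeSum G := by
  classical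
  choose! Ψ hΨ hΨχ hΨc using fun χ (hχ : χ ∈ irrChars (G ⧸ N)) ↦
    exists_constituent_resInner_le hθ hθ1 hnorm (mem_irrChars.1 hχ)
  have hmaps : ∀ χ ∈ irrChars (G ⧸ N), Ψ χ ∈ irrChars G \ inflatedIrrChars N := by
    refine fun χ hχ ↦ Finset.mem_sdiff.2 ⟨mem_irrChars.2 (hΨ χ hχ), fun hmem ↦ ?_⟩
    have hle := sum_degree_le_resInner (Finset.singleton_subset_iff.2 hχ) hθ (hΨ χ hχ)
      (by simpa using hΨχ χ hχ)
    rw [Finset.sum_singleton, resInner_eq_zero_of_mem_inflatedIrrChars horth hmem] at hle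
    exact hle.not_gt (mem_irrChars.1 hχ).degree_re_pos
  have hfiber : ∀ ψ ∈ irrChars G \ inflatedIrrChars N,
      ∑ χ ∈ irrChars (G ⧸ N) with Ψ χ = ψ, c * (χ 1).re ≤ (ψ 1).re := by
    intro ψ hψ
    have hψ := mem_irrChars.1 (Finset.mem_sdiff.1 hψ).1
    rcases Finset.eq_empty_or_nonempty {χ ∈ irrChars (G ⧸ N) | Ψ χ = ψ} with h | ⟨χ, h⟩
    · simpa [h] using hψ.degree_re_pos.le
    obtain ⟨hχ, rfl⟩ := Finset.mem_filter.1 h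
    rw [← Finset.mul_sum]
    refine (mul_le_mul_of_nonneg_left ?_ hc).trans (hΨc χ hχ)
    refine sum_degree_le_resInner (Finset.filter_subset _ _) hθ hψ fun χ' h' ↦ ?_
    obtain ⟨hχ', h'⟩ := Finset.mem_filter.1 h'
    exact h' ▸ hΨχ χ' hχ'
  calc (1 + c) * charDegreeSum (G ⧸ N)
      = ∑ χ ∈ irrChars (G ⧸ N), c * (χ 1).re + ∑ ψ ∈ inflatedIrrChars N, (ψ 1).re := by
        rw [sum_degree_inflatedIrrChars, ← Finset.mul_sum, ← charDegreeSum_eq_sum]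
        ring
    _ ≤ ∑ ψ ∈ irrChars G \ inflatedIrrChars N, (ψ 1).re + ∑ ψ ∈ inflatedIrrChars N, (ψ 1).re := by
        rw [← Finset.sum_fiberwise_of_maps_to hmaps]
        gcongr with ψ hψ
        exact hfiber ψ hψ
    _ = charDegreeSum G := by
        rw [Finset.sum_sdiff (inflatedIrrChars_subset N), charDegreeSum_eq_sum]

end Quotients

/-! ### Group actions with few orbits on pairs -/

section Actions

open MulAction

section PermutationCharacter

variable {H X Y : Type*} [Group H] [MulAction H X] [MulAction H Y]

lemma permChar_inv (h : H) : permChar H X h⁻¹ = permChar H X h := by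
  rw [permChar, fixedBy_inv, permChar]

lemma permChar_prod (h : H) : permChar H (X × Y) h = permChar H X h * permChar H Y h := by
  have hfixed : fixedBy (X × Y) h = fixedBy X h ×ˢ fixedBy Y h := by
    ext
    simp [Prod.ext_iff]
  simp only [permChar, hfixed, Nat.card_coe_set_eq, Set.ncard_prod, Nat.cast_mul]

variable [Finite H] [Finite X]

variable (H X) in
lemma charInner_permChar_one :
    charInner H (permChar H X) 1 = Nat.card (orbitRel.Quotient H X) := by
  classical
  have := Fintype.ofFinite H
  have := Fintype.ofFinite X
  have := Fintype.ofFinite (orbitRel.Quotient H X)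
  have hburnside := sum_card_fixedBy_eq_card_orbits_mul_card_group H X
  rw [charInner_apply, inv_mul_eq_iff_eq_mul₀ (NeZero.ne _), mul_comm]
  simpa [permChar, Nat.card_eq_fintype_card] using congrArg (Nat.cast (R := ℂ)) hburnside

variable (H X) in
lemma charInner_permChar_self :
    charInner H (permChar H X) (permChar H X) = Nat.card (orbitRel.Quotient H (X × X)) := by
  have := Fintype.ofFinite H
  simp [← charInner_permChar_one, charInner_apply, permChar_inv, permChar_prod]

end PermutationCharacter

lemma prime_mul_card_add_one_le {p : ℕ} [Fact p.Prime] {P X Ω : Type*} [Group P] [MulAction P X]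
    [Finite X] (hP : IsPGroup p P) {y : X} (hy : fixedPoints P X = {y}) {f : X → Ω}
    (hf : Function.Surjective f) (hinv : ∀ (g : P) (x : X), f (g • x) = f x) :
    p * Nat.card Ω + 1 ≤ Nat.card X + p := by
  classical
  have := Fintype.ofFinite X
  have := Finite.of_surjective f hf
  have := Fintype.ofFinite Ω
  have hfiber (x : X) (hx : f x ≠ f y) : p ≤ #{x' | f x' = f x} := by
    obtain ⟨n, hn⟩ := hP.card_orbit x
    have hn0 : n ≠ 0 := by
      rintro rfl
      have hfixed : x ∈ fixedPoints P X := by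
        have := Fintype.ofFinite (orbit P x)
        rwa [mem_fixedPoints_iff_card_orbit_eq_one, ← Nat.card_eq_fintype_card, ← pow_zero p]
      rw [hy] at hfixed
      exact hx (congrArg f hfixed)
    calc p ≤ Nat.card (orbit P x) := hn ▸ Nat.le_self_pow hn0 p
      _ ≤ #{x' | f x' = f x} := by
        rw [Nat.card_coe_set_eq, Set.ncard_eq_toFinset_card']
        refine Finset.card_le_card fun x' hx' ↦ ?_
        obtain ⟨g, rfl⟩ := Set.mem_toFinset.1 hx'
        simp [hinv]
  have hle := Finset.card_nsmul_le_sum (Finset.univ.erase (f y)) (fun ω ↦ #{x | f x = ω}) p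
    fun ω hω ↦ by
      obtain ⟨x, rfl⟩ := hf ω
      exact hfiber x (Finset.ne_of_mem_erase hω)
  have hpos : 0 < #{x | f x = f y} := Finset.card_pos.2 ⟨y, by simp⟩
  have hsum : Nat.card X = ∑ ω, #{x | f x = ω} := by
    rw [Nat.card_eq_fintype_card, ← Finset.card_univ]
    exact Finset.card_eq_sum_card_fiberwise fun _ _ ↦ Finset.mem_coe.2 (Finset.mem_univ _)
  rw [← Finset.add_sum_erase _ _ (Finset.mem_univ (f y))] at hsum
  rw [smul_eq_mul, Finset.card_erase_of_mem (Finset.mem_univ _), Finset.card_univ,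
    ← Nat.card_eq_fintype_card, Nat.sub_mul, one_mul, mul_comm] at hle
  omega

lemma prime_mul_card_orbits_prod_add_one_le {p : ℕ} [Fact p.Prime] {H X : Type*} [Group H]
    [MulAction H X] [IsPretransitive H X] [Finite X] {P : Subgroup H} (hP : IsPGroup p P) {y : X}
    (hy : fixedPoints P X = {y}) :
    p * Nat.card (orbitRel.Quotient H (X × X)) + 1 ≤ Nat.card X + p := by
  refine prime_mul_card_add_one_le hP hy
    (f := fun x ↦ (Quotient.mk _ (y, x) : orbitRel.Quotient H (X × X))) ?_ ?_
  · rintro ⟨x, x'⟩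
    obtain ⟨h, hh⟩ := exists_smul_eq H x y
    exact ⟨h • x', Quotient.sound ⟨h, Prod.ext hh rfl⟩⟩
  · intro g x
    have hgy : g • y = y := by
      have h : y ∈ fixedPoints P X := hy ▸ rfl
      exact h g
    exact Quotient.sound ⟨g, Prod.ext hgy rfl⟩

variable {G : Type} [Group G] [Finite G] {N : Subgroup G} [N.Normal] {p : ℕ} [Fact p.Prime]

theorem one_add_prime_mul_charDegreeSum_quotient_le {X : Type} [Finite X] [Nontrivial X]
    [MulAction G X] [IsPretransitive N X] {P : Subgroup N} (hP : IsPGroup p P) {y : X}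
    (hy : fixedPoints P X = {y}) :
    (1 + (p : ℝ)) * charDegreeSum (G ⧸ N) ≤ charDegreeSum G := by
  have hone : charInner N (permChar N X) 1 = 1 := by
    obtain ⟨_⟩ := (pretransitive_iff_unique_quotient_of_nonempty N X).1 inferInstance
    rw [charInner_permChar_one, Nat.card_unique, Nat.cast_one]
  have hself : charInner N 1 1 = 1 := isIrrChar_one.charInner_self
  have hmem : permChar G X - 1 ∈ characters G := by
    refine sub_mem_characters_of_charInner_ne_zero (permChar_mem_characters G X) isIrrChar_one ?_
    rw [charInner_permChar_one]
    have : Nonempty (orbitRel.Quotient G X) := ⟨Quotient.mk _ y⟩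
    exact NeZero.ne _
  have hnorm : resInner N (permChar G X - 1) (permChar G X - 1) =
      Nat.card (orbitRel.Quotient N (X × X)) - 1 := by
    change charInner N (permChar N X - 1) (permChar N X - 1) = _
    simp only [map_sub, LinearMap.sub_apply, charInner_permChar_self,
      charInner_comm 1 (permChar N X), hone, hself]
    ring
  refine one_add_mul_charDegreeSum_quotient_le hmem ?_ ?_ p.cast_nonneg ?_
  · rw [Pi.sub_apply, Pi.one_apply, permChar_one, sub_ne_zero]
    exact_mod_cast Finite.one_lt_card.ne'
  · change charInner N (permChar N X - 1) 1 = 0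
    rw [map_sub, LinearMap.sub_apply, hone, hself, sub_self]
  · have hle : (p : ℝ) * Nat.card (orbitRel.Quotient N (X × X)) + 1 ≤ Nat.card X + p := by
      exact_mod_cast prime_mul_card_orbits_prod_add_one_le hP hy
    simp only [hnorm, Pi.sub_apply, Pi.one_apply, permChar_one, Complex.sub_re,
      Complex.natCast_re, Complex.one_re]
    linarith

theorem one_add_prime_mul_charDegreeSum_quotient_le_of_sylow [Nontrivial (Sylow p N)] :
    (1 + (p : ℝ)) * charDegreeSum (G ⧸ N) ≤ charDegreeSum G := by
  have hconj (n : N) (Q : Sylow p N) : (MulAut.conjNormal (n : G) : MulAut N) • Q = n • Q := by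
    rw [MulAut.conjNormal_val, Sylow.smul_def]
  have htrans (Q R : Sylow p N) : ∃ n : N, (MulAut.conjNormal (n : G) : MulAut N) • Q = R := by
    simpa only [hconj] using exists_smul_eq N Q R
  obtain ⟨P⟩ : Nonempty (Sylow p N) := inferInstance
  have hfixed (Q : Sylow p N) :
      (∀ g : P, (MulAut.conjNormal ((g : N) : G) : MulAut N) • Q = Q) ↔ Q = P := by
    simp only [hconj]
    refine ⟨fun h ↦ Sylow.ext (P.3 Q.2 (P.2.sylow_mem_fixedPoints_iff.1 h)), ?_⟩
    rintro rfl
    exact Q.2.sylow_mem_fixedPoints_iff.2 le_rfl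
  let _ : MulAction G (Sylow p N) := MulAction.compHom _ (MulAut.conjNormal : G →* MulAut N)
  have : IsPretransitive N (Sylow p N) := ⟨htrans⟩
  exact one_add_prime_mul_charDegreeSum_quotient_le P.2 (Set.ext hfixed)

end Actions

/-! ### Endomorphisms of finite order -/

section FiniteOrder

lemma eq_of_sum_eq_card_smul {E : Type*} [NormedAddCommGroup E] [InnerProductSpace ℝ E]
    {s : Multiset E} (hs : ∀ x ∈ s, ‖x‖ = 1) {a : E} (ha : ‖a‖ = 1) (hsum : s.sum = s.card • a) :
    ∀ x ∈ s, x = a := by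
  have hnonneg : ∀ y ∈ s.map fun x ↦ 1 - inner ℝ a x, 0 ≤ y := by
    intro y hy
    obtain ⟨x, hx, rfl⟩ := Multiset.mem_map.1 hy
    simpa [ha, hs x hx] using real_inner_le_norm a x
  have hzero : (s.map fun x ↦ 1 - inner ℝ a x).sum = 0 := by
    have hinner : (s.map fun x ↦ inner ℝ a x).sum = inner ℝ a s.sum :=
      (map_multiset_sum (innerₛₗ ℝ a) s).symm
    simp [hinner, hsum, ← Nat.cast_smul_eq_nsmul ℝ, inner_smul_right, ha]
  intro x hx
  have hx0 := Multiset.all_zero_of_le_zero_le_of_sum_eq_zero hnonneg hzero _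
    (Multiset.mem_map_of_mem _ hx)
  exact ((inner_eq_one_iff_of_norm_eq_one (𝕜 := ℝ) ha (hs x hx)).1 (sub_eq_zero.1 hx0).symm).symm

lemma norm_eq_one_of_sum_eq_card_mul {K : Type*} [Field K] [NumberField K] {n : ℕ} [NeZero n]
    {s : Multiset K} (hs : ∀ x ∈ s, x ^ n = 1) {a : K} (ha0 : a ≠ 0) (ha : IsIntegral ℤ a)
    (hs0 : s ≠ 0) (hsum : s.sum = s.card * a) (φ : K →+* ℂ) : ‖φ a‖ = 1 := by
  have hle (σ : K →+* ℂ) : ‖σ a‖ ≤ 1 := by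
    have hcard : (0 : ℝ) < s.card := Nat.cast_pos.2 (Multiset.card_pos.2 hs0)
    have hnorm : ‖(s.map σ).sum‖ ≤ s.card := by
      refine (norm_multiset_sum_le _).trans_eq ?_
      rw [Multiset.map_map, Multiset.map_congr rfl (g := fun _ ↦ (1 : ℝ))]
      · simp
      · intro x hx
        exact Complex.norm_eq_one_of_pow_eq_one (by simp [← map_pow, hs x hx]) (NeZero.ne n)
    rw [← map_multiset_sum, hsum, map_mul, map_natCast, norm_mul, Complex.norm_natCast] at hnorm
    exact (mul_le_iff_le_one_right hcard).1 hnorm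
  obtain ⟨m, hm, hpow⟩ := NumberField.Embeddings.pow_eq_one_of_norm_le_one K ℂ ha0 ha hle
  exact Complex.norm_eq_one_of_pow_eq_one (by simp [← map_pow, hpow]) hm.ne'

lemma exists_multiset_map_eq_of_pow_eq_one {K L : Type*} [Field K] [Field L] [Algebra ℚ K] {n : ℕ}
    [NeZero n] [IsCyclotomicExtension {n} ℚ K] (φ : K →+* L) {s : Multiset L}
    (hs : ∀ x ∈ s, x ^ n = 1) : ∃ t : Multiset K, t.map φ = s := by
  have hζ := (IsCyclotomicExtension.zeta_spec n ℚ K).map_of_injective φ.injective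
  have hrange : ∀ x ∈ s, ∃ y, φ y = x := fun x hx ↦ by
    obtain ⟨i, -, hi⟩ := hζ.eq_pow_of_pow_eq_one (hs x hx)
    exact ⟨_, (map_pow φ _ i).trans hi⟩
  choose! f hf using hrange
  exact ⟨s.map f, by simp +contextual [hf]⟩

lemma eq_of_sum_eq_card_mul {n : ℕ} [NeZero n] {s : Multiset ℂ} (hs : ∀ x ∈ s, x ^ n = 1) {a : ℂ}
    (ha0 : a ≠ 0) (ha : IsIntegral ℤ a) (hsum : s.sum = s.card * a) : ∀ x ∈ s, x = a := by
  rcases eq_or_ne s 0 with rfl | hs0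
  · simp
  have : NeZero (n : ℚ) := ⟨Nat.cast_ne_zero.2 (NeZero.ne n)⟩
  have : IsCyclotomicExtension {n} ℚ (CyclotomicField n ℚ) :=
    CyclotomicField.isCyclotomicExtension n ℚ
  obtain ⟨φ⟩ : Nonempty (CyclotomicField n ℚ →+* ℂ) := inferInstance
  obtain ⟨t, rfl⟩ := exists_multiset_map_eq_of_pow_eq_one φ hs
  obtain ⟨b, rfl⟩ : ∃ b, φ b = a := by
    refine ⟨t.sum / t.card, ?_⟩
    rw [map_div₀, map_natCast, map_multiset_sum, hsum, Multiset.card_map,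
      mul_div_cancel_left₀ _ (by simpa using hs0)]
  have htsum : t.sum = t.card * b := φ.injective (by simpa [map_multiset_sum] using hsum)
  have hnorm := norm_eq_one_of_sum_eq_card_mul (n := n) (s := t)
    (fun x hx ↦ φ.injective (by simpa using hs _ (Multiset.mem_map_of_mem φ hx)))
    (by simpa using ha0) ((isIntegral_algHom_iff φ.toIntAlgHom φ.injective).1 ha)
    (by simpa using hs0) htsum φ
  refine eq_of_sum_eq_card_smul (fun x hx ↦ ?_) hnorm (by rw [hsum, nsmul_eq_mul])
  exact Complex.norm_eq_one_of_pow_eq_one (hs x hx) (NeZero.ne n)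

variable {k V : Type*} [Field k] [AddCommGroup V] [Module k V] [FiniteDimensional k V]
  {T : Module.End k V} {n : ℕ}

lemma pow_eq_one_of_mem_roots_charpoly (hT : T ^ n = 1) : ∀ x ∈ T.charpoly.roots, x ^ n = 1 := by
  intro x hx
  have hx' : T.HasEigenvalue x :=
    (Module.End.hasEigenvalue_iff_isRoot_charpoly T x).2 (Polynomial.isRoot_of_mem_roots hx)
  obtain ⟨v, hv⟩ := hx'.exists_hasEigenvector
  refine smul_left_injective k hv.2 ?_
  simpa [hT] using (hv.pow_apply n).symm

variable [IsAlgClosed k] [NeZero n]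

lemma isIntegral_trace_of_pow_eq_one (hT : T ^ n = 1) : IsIntegral ℤ (LinearMap.trace k V T) := by
  rw [Module.End.trace_eq_sum_roots_charpoly_of_splits (IsAlgClosed.splits _)]
  refine IsIntegral.multiset_sum fun x hx ↦ IsIntegral.of_pow (NeZero.pos n) ?_
  rw [pow_eq_one_of_mem_roots_charpoly hT x hx]
  exact isIntegral_one

open Polynomial in
lemma eq_algebraMap_of_roots_charpoly_eq [CharZero k] (hT : T ^ n = 1) {a : k}
    (ha : ∀ x ∈ T.charpoly.roots, x = a) : T = algebraMap k _ a := by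
  have hcharpoly : T.charpoly = (X - C a) ^ T.charpoly.roots.card := by
    conv_lhs => rw [(IsAlgClosed.splits T.charpoly).eq_prod_roots,
      (LinearMap.charpoly_monic T).leadingCoeff, Multiset.eq_replicate_card.2 ha]
    simp
  have hnilpotent : IsNilpotent (T - algebraMap k _ a) := by
    have h := LinearMap.aeval_self_charpoly T
    rw [hcharpoly] at h
    exact ⟨_, by simpa using h⟩
  have hsemisimple : (T - algebraMap k _ a).IsSemisimple := by
    have hsep : (X ^ n - 1 : k[X]).Separable :=
      X_pow_sub_one_separable_iff.2 (Nat.cast_ne_zero.2 (NeZero.ne n))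
    have h := (Module.End.isSemisimple_of_squarefree_aeval_eq_zero (f := T) hsep.squarefree
      (by simp [hT])).aeval (X - C a)
    simpa using h
  exact sub_eq_zero.1 (Module.End.eq_zero_of_isNilpotent_isSemisimple hnilpotent hsemisimple)

lemma eq_algebraMap_trace_div_finrank {V : Type*} [AddCommGroup V] [Module ℂ V]
    [FiniteDimensional ℂ V] {T : Module.End ℂ V} (hT : T ^ n = 1) (hne : LinearMap.trace ℂ V T ≠ 0)
    (hint : IsIntegral ℤ (LinearMap.trace ℂ V T / Module.finrank ℂ V)) :
    T = algebraMap ℂ _ (LinearMap.trace ℂ V T / Module.finrank ℂ V) := by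
  have hd : (Module.finrank ℂ V : ℂ) ≠ 0 := by
    intro h0
    have := Module.finrank_zero_iff.1 (Nat.cast_eq_zero.1 h0)
    exact hne (by simp [Subsingleton.elim T 0])
  refine eq_algebraMap_of_roots_charpoly_eq hT (eq_of_sum_eq_card_mul
    (pow_eq_one_of_mem_roots_charpoly hT) (div_ne_zero hne hd) hint ?_)
  rw [← (IsAlgClosed.splits T.charpoly).natDegree_eq_card_roots, LinearMap.charpoly_natDegree,
    mul_div_cancel₀ _ hd,
    ← Module.End.trace_eq_sum_roots_charpoly_of_splits (IsAlgClosed.splits _)]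

end FiniteOrder

/-! ### Burnside's theorem on conjugacy classes of prime power size -/

section CentralCharacter

lemma exists_eq_algebraMap_of_commute {k : Type} {G : Type*} [Field k] [IsAlgClosed k] [Monoid G]
    (V : FDRep k G) [CategoryTheory.Simple V] {T : Module.End k V}
    (hT : ∀ g, Commute T (V.ρ g)) : ∃ c : k, T = algebraMap k _ c := by
  let f : V ⟶ V :=
    { hom := FGModuleCat.ofHom T
      comm := fun g ↦ by
        ext v
        exact LinearMap.congr_fun (hT g) v }
  obtain ⟨c, hc⟩ := CategoryTheory.endomorphism_simple_eq_smul_id k f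
  refine ⟨c, LinearMap.ext fun v ↦ ?_⟩
  have := congrArg (fun h : V ⟶ V ↦ h.hom.hom v) hc
  exact this.symm

lemma commute_sum_of_forall_conj_mem {G R : Type*} [Group G] [Semiring R] (f : G →* R)
    {C : Finset G} (hC : ∀ g, ∀ x ∈ C, g * x * g⁻¹ ∈ C) (g : G) :
    Commute (∑ x ∈ C, f x) (f g) := by
  rw [commute_iff_eq, Finset.sum_mul, Finset.mul_sum]
  refine Finset.sum_bij' (fun x _ ↦ g⁻¹ * x * g) (fun x _ ↦ g * x * g⁻¹)
    (fun x hx ↦ by simpa using hC g⁻¹ x hx) (hC g) ?_ ?_ ?_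
  · simp [mul_assoc]
  · simp [mul_assoc]
  · simp [← map_mul, mul_assoc]

variable {G : Type} [Group G] [Finite G] {χ : G → ℂ}

lemma exists_isIntegral_sum_eq_algebraMap (V : FDRep ℂ G) [CategoryTheory.Simple V]
    [Nontrivial V] {C : Finset G} (hC : ∀ g, ∀ x ∈ C, g * x * g⁻¹ ∈ C) :
    ∃ ω : ℂ, IsIntegral ℤ ω ∧ ∑ x ∈ C, V.ρ x = algebraMap ℂ _ ω := by
  obtain ⟨ω, hω⟩ := exists_eq_algebraMap_of_commute V (commute_sum_of_forall_conj_mem V.ρ hC)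
  refine ⟨ω, ?_, hω⟩
  let Φ : MonoidAlgebra ℤ G →ₐ[ℤ] Module.End ℂ V := MonoidAlgebra.lift ℤ _ G V.ρ
  have hΦ : Φ (∑ x ∈ C, MonoidAlgebra.of ℤ G x) = algebraMap ℂ _ ω := by
    simp [Φ, ← hω]
  have hint := (IsIntegral.of_finite ℤ (∑ x ∈ C, MonoidAlgebra.of ℤ G x)).map Φ
  rw [hΦ] at hint
  exact (isIntegral_algebraMap_iff (FaithfulSMul.algebraMap_injective ℂ (Module.End ℂ V))).1 hint

namespace IsIrrChar

lemma isIntegral_apply (hχ : IsIrrChar G χ) (g : G) : IsIntegral ℤ (χ g) := by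
  obtain ⟨V, -, rfl⟩ := hχ
  refine isIntegral_trace_of_pow_eq_one (n := Nat.card G) ?_
  rw [← map_pow, pow_card_eq_one', map_one]

lemma isIntegral_card_conjugatesOf_mul_div (hχ : IsIrrChar G χ) (z : G) :
    IsIntegral ℤ (Nat.card (conjugatesOf z) * χ z / χ 1) := by
  have hdeg := hχ.degree_ne_zero
  obtain ⟨V, hV, rfl⟩ := hχ
  have : Nontrivial V := by
    rw [FDRep.char_one, Nat.cast_ne_zero] at hdeg
    exact Module.nontrivial_of_finrank_pos (Nat.pos_of_ne_zero hdeg)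
  let C := (conjugatesOf z).toFinite.toFinset
  have hC (x : G) : x ∈ C ↔ IsConj z x := Set.Finite.mem_toFinset _
  have hcard : (C.card : ℂ) = Nat.card (conjugatesOf z) := by
    rw [Nat.card_coe_set_eq, Set.ncard_eq_toFinset_card _ (conjugatesOf z).toFinite]
  obtain ⟨ω, hint, hω⟩ := exists_isIntegral_sum_eq_algebraMap V (C := C) fun g x hx ↦
    (hC _).2 (((hC x).1 hx).trans (isConj_iff.2 ⟨g, rfl⟩))
  have htrace : Nat.card (conjugatesOf z) * V.character z = ω * V.character 1 := by
    have h := congrArg (LinearMap.trace ℂ V) hω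
    rw [map_sum, Finset.sum_congr rfl (g := fun _ ↦ V.character z)] at h
    · simpa [hcard, Algebra.algebraMap_eq_smul_one] using h
    · intro x hx
      obtain ⟨c, rfl⟩ := isConj_iff.1 ((hC x).1 hx)
      exact FDRep.char_conj V z c
  rwa [htrace, mul_div_cancel_right₀ _ hdeg]

lemma isIntegral_div_degree_of_coprime (hχ : IsIrrChar G χ) (z : G) {d : ℕ} (hd : χ 1 = d)
    (hcop : (Nat.card (conjugatesOf z)).Coprime d) : IsIntegral ℤ (χ z / χ 1) := by
  obtain ⟨a, b, hab⟩ := Nat.isCoprime_iff_coprime.2 hcop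
  have hbezout : χ z / χ 1 = a * (Nat.card (conjugatesOf z) * χ z / χ 1) + b * χ z := by
    have hab' : (a * Nat.card (conjugatesOf z) + b * χ 1 : ℂ) = 1 := by
      rw [hd]
      exact_mod_cast hab
    have := hχ.degree_ne_zero
    field_simp
    linear_combination (-χ z) * hab'
  rw [hbezout]
  exact (isIntegral_algebraMap.mul (hχ.isIntegral_card_conjugatesOf_mul_div z)).add
    (isIntegral_algebraMap.mul (hχ.isIntegral_apply z))

end IsIrrChar

end CentralCharacter

section ConjugacyClasses

variable {G : Type} [Group G] [Finite G] {χ : G → ℂ}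

lemma not_isIntegral_inv_natCast {K : Type*} [Field K] [CharZero K] {m : ℕ} (hm : 1 < m) :
    ¬ IsIntegral ℤ (m : K)⁻¹ := by
  intro h
  have hQ : IsIntegral ℤ (m : ℚ)⁻¹ :=
    (isIntegral_algHom_iff (algebraMap ℚ K).toIntAlgHom (algebraMap ℚ K).injective).1 (by simpa)
  obtain ⟨k, hk⟩ := IsIntegrallyClosed.isIntegral_iff.1 hQ
  have hmul : k * m = 1 := by
    rw [eq_intCast, ← one_div, eq_div_iff (by positivity)] at hk
    exact_mod_cast hk
  have := Int.natAbs_dvd_natAbs.2 (Dvd.intro_left k hmul)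
  simp at this
  omega

lemma exists_isIrrChar_not_dvd_degree {z : G} (hz : z ≠ 1) {p : ℕ} (hp : p.Prime) :
    ∃ χ, IsIrrChar G χ ∧ χ ≠ 1 ∧ χ z ≠ 0 ∧ ∃ d : ℕ, χ 1 = d ∧ ¬ p ∣ d := by
  classical
  by_contra! hdvd
  have hp0 : (p : ℂ) ≠ 0 := Nat.cast_ne_zero.2 hp.ne_zero
  have hterm : ∀ χ ∈ (irrChars G).erase 1, IsIntegral ℤ (χ 1 * χ z / p) := by
    intro χ hχ
    obtain ⟨hne, hχ⟩ := Finset.mem_erase.1 hχ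
    rw [mem_irrChars] at hχ
    by_cases hχz : χ z = 0
    · simpa [hχz] using isIntegral_zero
    obtain ⟨d, -, hd⟩ := hχ.exists_degree_eq
    obtain ⟨m, rfl⟩ := hdvd χ hχ hne hχz d hd
    have hquot : χ 1 * χ z / p = m * χ z := by
      rw [hd]
      push_cast
      field_simp
    exact hquot ▸ (isIntegral_natCast m).mul (hχ.isIntegral_apply z)
  have hsum : ∑ χ ∈ (irrChars G).erase 1, χ 1 * χ z / p = -(p : ℂ)⁻¹ := by
    have h := sum_degree_mul_apply z
    rw [if_neg hz, ← Finset.add_sum_erase _ _ (mem_irrChars.2 isIrrChar_one)] at h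
    rw [← Finset.sum_div, eq_neg_of_add_eq_zero_right h]
    simp [neg_div]
  refine not_isIntegral_inv_natCast (K := ℂ) hp.one_lt ?_
  simpa [hsum] using (IsIntegral.sum _ hterm).neg

lemma IsIrrChar.eq_one_of_forall_apply_eq (hχ : IsIrrChar G χ) (h : ∀ g, χ g = χ 1) : χ = 1 := by
  by_contra hne
  have := Fintype.ofFinite G
  have hinner := hχ.charInner_eq_zero isIrrChar_one hne
  simp [charInner_apply, h, hχ.degree_ne_zero] at hinner

variable [IsSimpleGroup G]

lemma injective_ρ_of_character_ne_one (V : FDRep ℂ G) [CategoryTheory.Simple V]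
    (hV : V.character ≠ 1) : Function.Injective V.ρ := by
  rw [← MonoidHom.ker_eq_bot_iff]
  refine (Subgroup.Normal.eq_bot_or_eq_top inferInstance).resolve_right fun hker ↦ hV ?_
  refine IsIrrChar.eq_one_of_forall_apply_eq ⟨V, ‹_›, rfl⟩ fun g ↦ ?_
  have hg : V.ρ g = 1 := MonoidHom.mem_ker.1 (hker ▸ Subgroup.mem_top g)
  simp [FDRep.character, hg]

theorem mem_center_of_card_conjugatesOf_eq_prime_pow {z : G} {p c : ℕ} (hp : p.Prime)
    (hcard : Nat.card (conjugatesOf z) = p ^ c) : z ∈ Subgroup.center G := by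
  rcases eq_or_ne z 1 with rfl | hz
  · exact one_mem _
  obtain ⟨χ, hχ, hne, hχz, d, hd, hpd⟩ := exists_isIrrChar_not_dvd_degree hz hp
  have hint := hχ.isIntegral_div_degree_of_coprime z hd
    (hcard ▸ ((Nat.Prime.coprime_iff_not_dvd hp).2 hpd).pow_left c)
  obtain ⟨V, hV, rfl⟩ := hχ
  rw [FDRep.char_one] at hint
  have hscalar := eq_algebraMap_trace_div_finrank (n := Nat.card G) (T := V.ρ z)
    (by rw [← map_pow, pow_card_eq_one', map_one]) hχz hint
  refine Subgroup.mem_center_iff.2 fun g ↦ injective_ρ_of_character_ne_one V hne ?_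
  rw [map_mul, map_mul, hscalar]
  exact (Algebra.commutes _ _).symm

end ConjugacyClasses

/-! ### Solvability criteria -/

section Solvability

lemma card_conjugatesOf {G : Type*} [Group G] (z : G) :
    Nat.card (conjugatesOf z) = (Subgroup.centralizer {z}).index := by
  have horbit : conjugatesOf z = MulAction.orbit (ConjAct G) z := by
    ext x
    rw [ConjAct.mem_orbit_conjAct, isConj_comm]
    rfl
  rw [Subgroup.centralizer_eq_comap_stabilizer, horbit, Nat.card_coe_set_eq,
    ← MulAction.index_stabilizer]
  exact (Subgroup.index_comap_of_surjective _ ConjAct.toConjAct.surjective).symm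

lemma exists_ne_one_not_dvd_card_conjugatesOf {G : Type*} [Group G] [Finite G] {q : ℕ}
    [Fact q.Prime] (hq : q ∣ Nat.card G) :
    ∃ z : G, z ≠ 1 ∧ ¬ q ∣ Nat.card (conjugatesOf z) := by
  let Q : Sylow q G := default
  have hQ : Nontrivial Q := (Finite.one_lt_card_iff_nontrivial).1 <|
    (Nat.Prime.one_lt Fact.out).trans_le (Nat.le_of_dvd Nat.card_pos (Q.dvd_card_of_dvd_card hq))
  have := Q.isPGroup'.center_nontrivial
  obtain ⟨z, hz⟩ := exists_ne (1 : Subgroup.center Q)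
  have hle : (Q : Subgroup G) ≤ Subgroup.centralizer {(z : G)} := fun g hg ↦
    Subgroup.mem_centralizer_singleton_iff.2
      (congrArg Subtype.val (Subgroup.mem_center_iff.1 z.2 ⟨g, hg⟩))
  refine ⟨z, by simpa using hz, fun h ↦ Q.not_dvd_index (h.trans ?_)⟩
  exact card_conjugatesOf (z : G) ▸ Subgroup.index_dvd_of_le hle

lemma exists_eq_prime_pow_of_card_primeFactors_le_one {n : ℕ} (hn : n ≠ 0)
    (h : #n.primeFactors ≤ 1) : ∃ p k : ℕ, p.Prime ∧ n = p ^ k := by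
  rcases h.lt_or_eq with h0 | h1
  · have : n = 1 := by simpa [hn] using h0
    exact ⟨2, 0, Nat.prime_two, by simpa⟩
  · obtain ⟨p, k, hp, -, hpk⟩ :=
      (isPrimePow_nat_iff n).1 (isPrimePow_iff_card_primeFactors_eq_one.2 h1)
    exact ⟨p, k, hp, hpk.symm⟩

lemma isSolvable_of_card_primeFactors_le_two_of_isSimpleGroup {G : Type} [Group G] [Finite G]
    [IsSimpleGroup G] (h : #(Nat.card G).primeFactors ≤ 2) : Group.IsSolvable G := by
  obtain ⟨q, hq, hqG⟩ := Nat.exists_prime_and_dvd (Finite.one_lt_card (α := G)).ne'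
  have : Fact q.Prime := ⟨hq⟩
  obtain ⟨z, hz, hqz⟩ := exists_ne_one_not_dvd_card_conjugatesOf hqG
  have hdvd : Nat.card (conjugatesOf z) ∣ Nat.card G :=
    card_conjugatesOf z ▸ Subgroup.index_dvd_card _
  have hz0 : Nat.card (conjugatesOf z) ≠ 0 := ne_zero_of_dvd_ne_zero Nat.card_pos.ne' hdvd
  have hsub : (Nat.card (conjugatesOf z)).primeFactors ⊆ (Nat.card G).primeFactors.erase q :=
    Finset.subset_erase.2 ⟨Nat.primeFactors_mono hdvd Nat.card_pos.ne',
      fun hmem ↦ hqz (Nat.dvd_of_mem_primeFactors hmem)⟩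
  obtain ⟨p, c, hp, hcard⟩ := exists_eq_prime_pow_of_card_primeFactors_le_one hz0 <| by
    have := Finset.card_le_card hsub
    rw [Finset.card_erase_of_mem (Nat.mem_primeFactors.2 ⟨hq, hqG, Nat.card_pos.ne'⟩)] at this
    omega
  have hcenter : Subgroup.center G = ⊤ := by
    refine (Subgroup.Normal.eq_bot_or_eq_top inferInstance).resolve_left fun hbot ↦ hz ?_
    exact Subgroup.mem_bot.1 (hbot ▸ mem_center_of_card_conjugatesOf_eq_prime_pow hp hcard)
  exact IsSimpleGroup.comm_iff_isSolvable.1 fun a b ↦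
    Subgroup.mem_center_iff.1 (hcenter ▸ Subgroup.mem_top b) a

lemma card_quotient_lt_card {G : Type*} [Group G] [Finite G] {H : Subgroup G} (hH : H ≠ ⊥) :
    Nat.card (G ⧸ H) < Nat.card G := by
  rw [Subgroup.card_eq_card_quotient_mul_card_subgroup H]
  exact lt_mul_of_one_lt_right Nat.card_pos (Subgroup.one_lt_card_iff_ne_bot H |>.2 hH)

theorem isSolvable_of_card_primeFactors_le_two (G : Type) [Group G] [Finite G]
    (h : #(Nat.card G).primeFactors ≤ 2) : Group.IsSolvable G := by
  induction hn : Nat.card G using Nat.strong_induction_on generalizing G with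
  | _ n ih =>
    have hmono {k : ℕ} (hk : k ∣ Nat.card G) : #k.primeFactors ≤ 2 :=
      (Finset.card_le_card (Nat.primeFactors_mono hk Nat.card_pos.ne')).trans h
    rcases subsingleton_or_nontrivial G with hG | hG
    · infer_instance
    by_cases hsimple : IsSimpleGroup G
    · exact isSolvable_of_card_primeFactors_le_two_of_isSimpleGroup h
    obtain ⟨H, hnormal, hbot, htop⟩ : ∃ H : Subgroup G, H.Normal ∧ H ≠ ⊥ ∧ H ≠ ⊤ := by
      by_contra! hH
      exact hsimple ⟨fun H hnormal ↦ or_iff_not_imp_left.2 (hH H hnormal)⟩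
    have hlt : Nat.card H < n := hn ▸ lt_of_le_of_ne (Subgroup.card_le_card_group H)
      fun hcard ↦ htop (Subgroup.eq_top_of_card_eq H hcard)
    exact (Group.isSolvable_iff_subgroup_quotient H).2
      ⟨ih _ hlt H (hmono (Subgroup.card_subgroup_dvd_card H)) rfl,
        ih _ (hn ▸ card_quotient_lt_card hbot) (G ⧸ H)
          (hmono (Subgroup.card_quotient_dvd_card H)) rfl⟩

theorem isSolvable_of_forall_subsingleton_sylow (G : Type) [Group G] [Finite G]
    (h : ∀ p : ℕ, p.Prime → 5 ≤ p → Subsingleton (Sylow p G)) : Group.IsSolvable G := by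
  induction hn : Nat.card G using Nat.strong_induction_on generalizing G with
  | _ n ih =>
    by_cases hex : ∃ p : ℕ, p.Prime ∧ 5 ≤ p ∧ p ∣ Nat.card G
    · obtain ⟨p, hp, hp5, hdvd⟩ := hex
      have : Fact p.Prime := ⟨hp⟩
      have := h p hp hp5
      let P : Sylow p G := default
      have hnormal : (P : Subgroup G).Normal := P.normal_of_subsingleton
      have hnilpotent : Group.IsNilpotent P := P.isPGroup'.isNilpotent
      have hlt : Nat.card (G ⧸ (P : Subgroup G)) < n :=
        hn ▸ card_quotient_lt_card (P.ne_bot_of_dvd_card hdvd)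
      refine (Group.isSolvable_iff_subgroup_quotient (P : Subgroup G)).2
        ⟨inferInstance, ih _ hlt _ (fun q hq hq5 ↦ ?_) rfl⟩
      have : Fact q.Prime := ⟨hq⟩
      have := h q hq hq5
      exact (Sylow.mapSurjective_surjective (QuotientGroup.mk'_surjective _) q).subsingleton
    · push Not at hex
      refine isSolvable_of_card_primeFactors_le_two G ?_
      have hsub : (Nat.card G).primeFactors ⊆ {2, 3} := fun p hp ↦ by
        obtain ⟨hprime, hdvd, -⟩ := Nat.mem_primeFactors.1 hp
        have hlt : p < 5 := not_le.1 fun hp5 ↦ hex p hprime hp5 hdvd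
        interval_cases p <;> simp_all +decide
      exact Finset.card_le_card hsub

end Solvability

theorem degree_sum_ge_six_mul_quotient
    (G : Type) [Group G] [Finite G] (N : Subgroup G) [N.Normal]
    (hN_nonsolvable : ¬ IsSolvable N) :
    6 * charDegreeSum (G ⧸ N) ≤ charDegreeSum G := by
  obtain ⟨p, hp, hp5, hsylow⟩ : ∃ p : ℕ, p.Prime ∧ 5 ≤ p ∧ Nontrivial (Sylow p N) := by
    by_contra! h
    exact hN_nonsolvable (isSolvable_of_forall_subsingleton_sylow N h)
  have : Fact p.Prime := ⟨hp⟩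
  calc 6 * charDegreeSum (G ⧸ N) ≤ (1 + (p : ℝ)) * charDegreeSum (G ⧸ N) := by
        gcongr
        · exact charDegreeSum_nonneg _
        · have : (5 : ℝ) ≤ p := by exact_mod_cast hp5
          linarith
    _ ≤ charDegreeSum G := one_add_prime_mul_charDegreeSum_quotient_le_of_sylow
end

section
/- Let G be a finite group. If T(G) ≤ 2·k(G), where T(G) is the sum of the degrees of the complex irreducible characters of G and k(G) is the number of conjugacy classes of G, then G is solvable. -/
/-!
Suppose `G` is not solvable, and let `N / M` be a chief factor of `G` with `N` perfect. For each
prime `p` dividing `|N : M|`, the normalizer of a Sylow `p`-subgroup of `N / M` yields a proper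
subgroup `Y` with `Y N = G`, with `p ∤ |G : Y|`, and with `(Y ∩ N) / M` nonabelian by Burnside's
transfer theorem.

Inducing the restriction to `Y` of a linear character `μ` of `G` gives a character of degree
`|G : Y|` in which `μ` is the only constituent trivial on `N`, so the constituents nontrivial on
`N` have total degree `|G : Y| - 1`. If `χ` is nontrivial on `N`, its restriction to `Y` contains
at most `χ(1) - 2` linear characters extending to `G`: none at all if `χ` is nontrivial on `M`, and
otherwise `Y'` would lie in the kernel of `χ`, which meets `N` in `M`. Since `T(G) ≤ 2 k(G)` leaves
no slack in this count, each induced character has exactly one constituent nontrivial on `N`, and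
`|G : Y| - 1` is the only degree above `2` of a character nontrivial on `N`. This determines
`|G : Y|`, although for a prime `q` dividing `|G : Y|` there is also a supplement whose index is
prime to `q`.
-/

section DoubleCounting

variable {J Λ : Type*} [Fintype Λ] {s : Finset J} {d : J → ℕ} {a : Λ → J → ℕ} {c m : ℕ}

-- Every row sum of `a` is positive, so `∑ a` is both at least and at most the number of rows.
theorem sum_eq_one_and_sum_add_eq (hm : m ≠ 0) (hcol : ∀ j ∈ s, ∑ l, a l j + c ≤ d j)
    (hrow : ∀ l, ∑ j ∈ s, d j * a l j = m)
    (htotal : ∑ j ∈ s, d j ≤ Fintype.card Λ + c * s.card) :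
    (∀ l, ∑ j ∈ s, a l j = 1) ∧ ∀ j ∈ s, ∑ l, a l j + c = d j := by
  have one_le_sum (l : Λ) : 1 ≤ ∑ j ∈ s, a l j := by
    rw [Nat.one_le_iff_ne_zero]
    intro hzero
    refine hm ((hrow l).symm.trans (Finset.sum_eq_zero fun j hj => ?_))
    rw [Finset.sum_eq_zero_iff.mp hzero j hj, mul_zero]
  have card_le : Fintype.card Λ ≤ ∑ l, ∑ j ∈ s, a l j := by
    simpa using Finset.card_nsmul_le_sum Finset.univ _ 1 fun l _ => one_le_sum l
  have sum_le : ∑ l, ∑ j ∈ s, a l j + c * s.card ≤ ∑ j ∈ s, d j := by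
    rw [Finset.sum_comm]
    simpa [Finset.sum_add_distrib, mul_comm] using Finset.sum_le_sum hcol
  constructor
  · intro l
    refine ((Finset.sum_eq_sum_iff_of_le fun l _ => one_le_sum l).mp ?_ l (Finset.mem_univ l)).symm
    simp only [Finset.sum_const, Finset.card_univ, smul_eq_mul, mul_one]
    lia
  · refine (Finset.sum_eq_sum_iff_of_le hcol).mp ?_
    rw [Finset.sum_add_distrib, Finset.sum_comm, Finset.sum_const, smul_eq_mul]
    lia

theorem eq_of_sum_mul_eq {a : J → ℕ} (hsum : ∑ j ∈ s, a j = 1) (hmul : ∑ j ∈ s, d j * a j = m)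
    {j : J} (hj : j ∈ s) (haj : a j ≠ 0) : d j = m := by
  classical
  have hadd := Finset.add_sum_erase s a hj
  have hzero : ∑ i ∈ s.erase j, a i = 0 := by lia
  have hone : a j = 1 := by lia
  rw [← Finset.add_sum_erase s _ hj, hone, mul_one, Finset.sum_eq_zero, add_zero] at hmul
  · exact hmul
  · intro i hi
    rw [Finset.sum_eq_zero_iff.mp hzero i hi, mul_zero]

theorem image_eq_singleton_of_sum_le [Nonempty Λ] (hm : m ≠ 0)
    (hcol : ∀ j ∈ s, ∑ l, a l j + c ≤ d j) (hrow : ∀ l, ∑ j ∈ s, d j * a l j = m)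
    (htotal : ∑ j ∈ s, d j ≤ Fintype.card Λ + c * s.card) :
    d '' {j | j ∈ s ∧ c < d j} = {m} := by
  obtain ⟨hrow_one, hcol_eq⟩ := sum_eq_one_and_sum_add_eq hm hcol hrow htotal
  have degree_eq {l : Λ} {j : J} (hj : j ∈ s) (hlj : a l j ≠ 0) : d j = m :=
    eq_of_sum_mul_eq (hrow_one l) (hrow l) hj hlj
  ext n
  constructor
  · rintro ⟨j, ⟨hj, hlt⟩, rfl⟩
    obtain ⟨l, -, hlj⟩ := Finset.exists_ne_zero_of_sum_ne_zero
      (show ∑ l, a l j ≠ 0 by have := hcol_eq j hj; lia)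
    exact degree_eq hj hlj
  · rintro rfl
    obtain ⟨l⟩ := ‹Nonempty Λ›
    obtain ⟨j, hj, hlj⟩ := Finset.exists_ne_zero_of_sum_ne_zero
      (show ∑ j ∈ s, a l j ≠ 0 by rw [hrow_one]; exact one_ne_zero)
    refine ⟨j, ⟨hj, ?_⟩, degree_eq hj hlj⟩
    have hle := Finset.single_le_sum_of_canonicallyOrdered (f := fun l => a l j) (Finset.mem_univ l)
    have := hcol_eq j hj
    lia

end DoubleCounting

section ChiefFactor

open scoped commutatorElement

theorem commutator_normalizer_sylow_ne_bot {H : Type*} [Group H] (hperf : commutator H = ⊤)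
    {p : ℕ} [Fact p.Prime] [Finite (Sylow p H)] (P : Sylow p H) [P.FiniteIndex]
    (hP : (P : Subgroup H) ≠ ⊥) :
    ⁅Subgroup.normalizer (P : Set H), Subgroup.normalizer (P : Set H)⁆ ≠ ⊥ := by
  intro hcomm
  have hPN : (P : Subgroup H) ≤ Subgroup.normalizer (P : Set H) := Subgroup.le_normalizer
  have hNC : Subgroup.normalizer (P : Set H) ≤ Subgroup.centralizer (P : Set H) :=
    (Subgroup.commutator_eq_bot_iff_le_centralizer.mp hcomm).trans (Subgroup.centralizer_le hPN)
  have hker : (MonoidHom.transferSylow P hNC).ker = ⊤ := by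
    rw [eq_top_iff, ← hperf, commutator_def, Subgroup.commutator_le]
    intro a _ b _
    rw [MonoidHom.mem_ker, map_commutatorElement, commutatorElement_eq_one_iff_mul_comm]
    exact Subtype.ext (hNC (hPN (SetLike.coe_mem _)) _ (SetLike.coe_mem _))
  have hcompl := MonoidHom.ker_transferSylow_isComplement' P hNC
  rw [hker, Subgroup.isComplement'_top_left] at hcompl
  exact hP hcompl

theorem index_eq_relIndex_of_sup_eq_top {G : Type*} [Group G] {Y N : Subgroup G} [N.Normal]
    [N.FiniteIndex] (h : Y ⊔ N = ⊤) : Y.index = Y.relIndex N := by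
  have hN : N.relIndex Y = N.index := by
    rw [← Subgroup.relIndex_sup_right, h, Subgroup.relIndex_top_right]
  have hY := Subgroup.relIndex_mul_index (inf_le_left : Y ⊓ N ≤ Y)
  rw [Subgroup.inf_relIndex_left, hN,
    ← Subgroup.relIndex_mul_index (inf_le_right : Y ⊓ N ≤ N), Subgroup.inf_relIndex_right,
    mul_comm] at hY
  exact Nat.eq_of_mul_eq_mul_right (Nat.pos_of_ne_zero Subgroup.FiniteIndex.index_ne_zero) hY

theorem comp_subtype_injective_of_sup_eq_top {G : Type*} (A : Type*) [Group G] [CommGroup A]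
    {Y N : Subgroup G} [N.Normal] (hYN : Y ⊔ N = ⊤) (hN : N ≤ commutator G) :
    Function.Injective fun f : G →* A => f.comp Y.subtype := by
  intro f₁ f₂ hf
  refine MonoidHom.ext fun g => ?_
  obtain ⟨y, hy, n, hn, rfl⟩ := Subgroup.mem_sup_of_normal_right.mp (hYN ▸ Subgroup.mem_top g)
  rw [map_mul, map_mul, Abelianization.commutator_subset_ker f₁ (hN hn),
    Abelianization.commutator_subset_ker f₂ (hN hn)]
  exact congrArg (· * 1) (DFunLike.congr_fun hf ⟨y, hy⟩)

/-- `N / M` is a chief factor of `G` whose upper term `N` is a perfect group. -/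
structure IsPerfectChiefFactor {G : Type*} [Group G] (M N : Subgroup G) : Prop where
  normal_top : N.Normal
  maximal : Maximal (fun K : Subgroup G => K.Normal ∧ K < N) M
  commutator_eq : ⁅N, N⁆ = N

/-- `Y` is a proper subgroup containing `M` with `Y N = G` such that `(Y ∩ N) / M` is nonabelian. -/
structure IsNonabelianSupplement {G : Type*} [Group G] (M N Y : Subgroup G) : Prop where
  le : M ≤ Y
  sup_eq_top : Y ⊔ N = ⊤
  ne_top : Y ≠ ⊤
  not_commutator_le : ¬ ⁅Y ⊓ N, Y ⊓ N⁆ ≤ M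

theorem exists_isPerfectChiefFactor {G : Type*} [Group G] [Finite G] (h : ¬ Group.IsSolvable G) :
    ∃ M N : Subgroup G, IsPerfectChiefFactor M N := by
  obtain ⟨_, ⟨n, rfl⟩, hmin⟩ := (Set.toFinite (Set.range (derivedSeries G))).exists_minimal
    (Set.range_nonempty _)
  have hle : derivedSeries G (n + 1) ≤ derivedSeries G n := derivedSeries_antitone G n.le_succ
  have hne : derivedSeries G n ≠ ⊥ := fun hbot => h ⟨⟨n, hbot⟩⟩
  obtain ⟨M, hM⟩ :=
    (Set.toFinite {K : Subgroup G | K.Normal ∧ K < derivedSeries G n}).exists_maximal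
      ⟨⊥, inferInstance, bot_lt_iff_ne_bot.mpr hne⟩
  exact ⟨M, derivedSeries G n, inferInstance, hM, le_antisymm hle (hmin ⟨n + 1, rfl⟩ hle)⟩

theorem IsNonabelianSupplement.comap {G Q : Type*} [Group G] [Group Q] {f : G →* Q}
    (hf : Function.Surjective f) {N : Subgroup G} (hN : f.ker ≤ N) {Y : Subgroup Q}
    (h : IsNonabelianSupplement ⊥ (N.map f) Y) : IsNonabelianSupplement f.ker N (Y.comap f) where
  le := f.ker_le_comap Y
  sup_eq_top := by
    rw [← Subgroup.comap_map_eq_self hN, Subgroup.comap_sup_eq _ _ _ hf, h.sup_eq_top,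
      Subgroup.comap_top]
  ne_top := fun htop => h.ne_top <| by
    rw [← Subgroup.map_comap_eq_self_of_surjective hf Y, htop, Subgroup.map_top_of_surjective f hf]
  not_commutator_le := fun hle => h.not_commutator_le <| by
    have hmap : (Y.comap f ⊓ N).map f = Y ⊓ N.map f := by
      rw [← Subgroup.comap_map_eq_self hN, ← Subgroup.comap_inf,
        Subgroup.map_comap_eq_self_of_surjective hf, Subgroup.comap_map_eq_self hN]
    rw [← hmap, ← Subgroup.map_commutator, le_bot_iff, Subgroup.map_eq_bot_iff]
    exact hle

namespace IsPerfectChiefFactor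

variable {G : Type*} [Group G] {M N : Subgroup G}

theorem normal_bot (h : IsPerfectChiefFactor M N) : M.Normal := h.maximal.prop.1

theorem lt (h : IsPerfectChiefFactor M N) : M < N := h.maximal.prop.2

theorem relIndex_ne_one (h : IsPerfectChiefFactor M N) : M.relIndex N ≠ 1 :=
  fun hone => h.lt.not_ge (Subgroup.relIndex_eq_one.mp hone)

theorem le_commutator (h : IsPerfectChiefFactor M N) : N ≤ commutator G :=
  h.commutator_eq.ge.trans (Subgroup.commutator_mono le_top le_top)

theorem eq_of_normal (h : IsPerfectChiefFactor M N) {K : Subgroup G} (hK : K.Normal)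
    (hMK : M ≤ K) (hKN : K ≤ N) : K = M ∨ K = N :=
  hKN.lt_or_eq.imp_left fun hlt => (h.maximal.eq_of_le ⟨hK, hlt⟩ hMK).symm

theorem commutator_eq_top (h : IsPerfectChiefFactor M N) : commutator N = ⊤ := by
  apply Subgroup.map_injective N.subtype_injective
  rw [Subgroup.map_subtype_commutator, h.commutator_eq, ← MonoidHom.range_eq_map, N.range_subtype]

theorem map {Q : Type*} [Group Q] {f : G →* Q} (hf : Function.Surjective f)
    (h : IsPerfectChiefFactor f.ker N) : IsPerfectChiefFactor ⊥ (N.map f) where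
  normal_top := h.normal_top.map f hf
  commutator_eq := by rw [← Subgroup.map_commutator, h.commutator_eq]
  maximal := by
    refine ⟨⟨inferInstance, bot_lt_iff_ne_bot.mpr fun hbot =>
      h.lt.not_ge ((Subgroup.map_eq_bot_iff _).mp hbot)⟩, fun K hK _ => ?_⟩
    have hle : K.comap f ≤ N := by
      rw [← Subgroup.comap_map_eq_self h.lt.le]
      exact Subgroup.comap_mono hK.2.le
    rcases h.eq_of_normal (hK.1.comap f) (f.ker_le_comap K) hle with hker | htop
    · rw [← Subgroup.map_comap_eq_self_of_surjective hf K, hker, le_bot_iff,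
        Subgroup.map_eq_bot_iff]
    · exact absurd (htop ▸ (Subgroup.map_comap_eq_self_of_surjective hf K).symm) hK.2.ne

theorem not_isPGroup [Finite G] (h : IsPerfectChiefFactor M N) {p : ℕ} [Fact p.Prime] :
    ¬ IsPGroup p N := by
  intro hp
  have := hp.isNilpotent
  have : Nontrivial N := N.nontrivial_iff_ne_bot.mpr (ne_bot_of_gt h.lt)
  exact (Group.IsSolvable.commutator_lt_top_of_nontrivial N).ne h.commutator_eq_top

theorem not_normal_map_sylow [Finite G] (h : IsPerfectChiefFactor ⊥ N) {p : ℕ} [Fact p.Prime]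
    {P : Sylow p N} (hP : (P : Subgroup N) ≠ ⊥) : ¬ ((P : Subgroup N).map N.subtype).Normal := by
  intro hnormal
  rcases h.eq_of_normal hnormal bot_le (Subgroup.map_subtype_le _) with hbot | htop
  · exact hP ((Subgroup.map_eq_bot_iff_of_injective _ N.subtype_injective).mp hbot)
  · exact h.not_isPGroup (htop ▸ P.isPGroup'.map N.subtype)

theorem isNonabelianSupplement_normalizer [Finite G] (h : IsPerfectChiefFactor ⊥ N) {p : ℕ}
    [Fact p.Prime] {P : Sylow p N} (hP : (P : Subgroup N) ≠ ⊥) :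
    IsNonabelianSupplement ⊥ N
      (Subgroup.normalizer ((P : Subgroup N).map N.subtype : Set G)) where
  le := bot_le
  sup_eq_top := have := h.normal_top; P.normalizer_sup_eq_top
  ne_top := fun htop => h.not_normal_map_sylow hP (Subgroup.normalizer_eq_top_iff.mp htop)
  not_commutator_le := by
    rw [← Subgroup.subgroupOf_map_subtype, ← Subgroup.map_commutator, le_bot_iff,
      Subgroup.map_eq_bot_iff_of_injective _ N.subtype_injective,
      Subgroup.subgroupOf_normalizer_eq (Subgroup.map_subtype_le _), Subgroup.subgroupOf,
      Subgroup.comap_map_eq_self_of_injective N.subtype_injective]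
    exact commutator_normalizer_sylow_ne_bot h.commutator_eq_top P hP

theorem exists_supplement_of_bot [Finite G] (h : IsPerfectChiefFactor ⊥ N) {p : ℕ} (hp : p.Prime)
    (hpN : p ∣ Nat.card N) :
    ∃ Y, IsNonabelianSupplement ⊥ N Y ∧ Y.index ∣ Nat.card N ∧ ¬ p ∣ Y.index := by
  have : Fact p.Prime := ⟨hp⟩
  have := h.normal_top
  obtain ⟨P⟩ : Nonempty (Sylow p N) := inferInstance
  have hsupp := h.isNonabelianSupplement_normalizer (P.ne_bot_of_dvd_card hpN)
  have hindex := index_eq_relIndex_of_sup_eq_top hsupp.sup_eq_top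
  refine ⟨_, hsupp, hindex ▸ Subgroup.relIndex_dvd_card _ N, fun hdvd => P.not_dvd_index ?_⟩
  have hP : ((P : Subgroup N).map N.subtype).relIndex N = (P : Subgroup N).index := by
    rw [Subgroup.relIndex, Subgroup.subgroupOf,
      Subgroup.comap_map_eq_self_of_injective N.subtype_injective]
  rw [← hP]
  exact (hindex ▸ hdvd).trans (Subgroup.relIndex_dvd_of_le_left N Subgroup.le_normalizer)

theorem exists_supplement [Finite G] (h : IsPerfectChiefFactor M N) {p : ℕ} (hp : p.Prime)
    (hpN : p ∣ M.relIndex N) :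
    ∃ Y, IsNonabelianSupplement M N Y ∧ Y.index ∣ M.relIndex N ∧ ¬ p ∣ Y.index := by
  have := h.normal_bot
  have hker := QuotientGroup.ker_mk' M
  have hsurj := QuotientGroup.mk'_surjective M
  have hcard : M.relIndex N = Nat.card (N.map (QuotientGroup.mk' M)) := by
    rw [← Subgroup.relIndex_ker, hker]
  have hfactor : IsPerfectChiefFactor ⊥ (N.map (QuotientGroup.mk' M)) :=
    IsPerfectChiefFactor.map hsurj (hker.symm ▸ h)
  obtain ⟨Y, hY, hindex, hpY⟩ := hfactor.exists_supplement_of_bot hp (hcard ▸ hpN)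
  refine ⟨Y.comap (QuotientGroup.mk' M), ?_, ?_, ?_⟩
  · simpa only [hker] using hY.comap hsurj (hker.le.trans h.lt.le)
  · rwa [Subgroup.index_comap_of_surjective Y hsurj, hcard]
  · rwa [Subgroup.index_comap_of_surjective Y hsurj]

end IsPerfectChiefFactor

end ChiefFactor

section Irreducible

open Representation

variable {k G V : Type*} [Field k] [Group G] [AddCommGroup V] [Module k V]
  {ρ : Representation k G V}

theorem isCompl_toSubmodule {A B : Subrepresentation ρ} (h : IsCompl A B) :
    IsCompl A.toSubmodule B.toSubmodule := by
  constructor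
  · exact disjoint_iff.mpr (congrArg Subrepresentation.toSubmodule h.inf_eq_bot)
  · exact codisjoint_iff.mpr (congrArg Subrepresentation.toSubmodule h.sup_eq_top)

theorem nontrivial_of_isIrreducible (ρ : Representation k G V) [IsIrreducible ρ] :
    Nontrivial V := by
  by_contra hV
  rw [not_nontrivial_iff_subsingleton] at hV
  exact bot_ne_top (Subrepresentation.toSubmodule_injective
    (Subsingleton.elim (⊥ : Subrepresentation ρ).toSubmodule ⊤))

theorem eq_top_of_apply_mem [IsIrreducible ρ] {W : Submodule k V}
    (hW : ∀ g, ∀ v ∈ W, ρ g v ∈ W) (hbot : W ≠ ⊥) : W = ⊤ :=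
  congrArg Subrepresentation.toSubmodule <| (eq_bot_or_eq_top
    (⟨W, hW⟩ : Subrepresentation ρ)).resolve_left fun h =>
      hbot (congrArg Subrepresentation.toSubmodule h)

theorem le_ker_iff_invariants_eq_top {S : Subgroup G} :
    S ≤ ρ.ker ↔ invariants (ρ.comp S.subtype) = ⊤ := by
  simp only [SetLike.le_def, MonoidHom.mem_ker, LinearMap.ext_iff, Module.End.one_apply,
    Submodule.eq_top_iff', mem_invariants, Subtype.forall]
  exact ⟨fun h v g hg => h hg v, fun h g hg v => h v g hg⟩

theorem le_ker_of_invariants_ne_bot [IsIrreducible ρ] {M : Subgroup G} [M.Normal]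
    (h : invariants (ρ.comp M.subtype) ≠ ⊥) : M ≤ ρ.ker :=
  le_ker_iff_invariants_eq_top.mpr (eq_top_of_apply_mem (le_comap_invariants ρ M) h)

theorem commutator_le_ker_of_finrank_le_one [FiniteDimensional k V]
    (h : Module.finrank k V ≤ 1) : commutator G ≤ ρ.ker := by
  obtain ⟨v, hv⟩ := finrank_le_one_iff.mp h
  have hcomm (a b : G) : ρ a * ρ b = ρ b * ρ a := by
    obtain ⟨α, hα⟩ := hv (ρ a v)
    obtain ⟨β, hβ⟩ := hv (ρ b v)
    ext w
    obtain ⟨c, rfl⟩ := hv w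
    simp only [Module.End.mul_apply, map_smul, ← hα, ← hβ, smul_comm α β]
  rw [commutator_def, Subgroup.commutator_le]
  intro a _ b _
  rw [MonoidHom.mem_ker, commutatorElement_def, map_mul, map_mul, map_mul, hcomm a b]
  simp only [← map_mul, mul_inv_cancel_right, mul_inv_cancel, map_one]

-- A complement of the invariants of `G'` has dimension at most one, so `G'` acts trivially on it.
theorem commutator_le_ker_of_finrank_le [Finite G] [NeZero (Nat.card G : k)]
    [FiniteDimensional k V]
    (h : Module.finrank k V ≤
      Module.finrank k (invariants (ρ.comp (commutator G).subtype)) + 1) :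
    commutator G ≤ ρ.ker := by
  let W : Subrepresentation ρ := ⟨_, le_comap_invariants ρ (commutator G)⟩
  obtain ⟨C, hWC⟩ := exists_isCompl W
  have hdim := Submodule.finrank_add_eq_of_isCompl (isCompl_toSubmodule hWC)
  have hker : commutator G ≤ C.toRepresentation.ker :=
    commutator_le_ker_of_finrank_le_one (Nat.le_of_add_le_add_left (hdim.trans_le h))
  have hCW : C ≤ W := fun v hv g =>
    congrArg Subtype.val (LinearMap.congr_fun (hker g.2) (⟨v, hv⟩ : C.toSubmodule))
  have hW : W = ⊤ := by rw [← hWC.sup_eq_top, sup_eq_left.mpr hCW]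
  exact le_ker_iff_invariants_eq_top.mpr (congrArg Subrepresentation.toSubmodule hW)

end Irreducible

section WeightSpace

open Representation

variable {k G V : Type*} [Field k] [Group G] [AddCommGroup V] [Module k V]

/-- The tensor product of `ρ` with the one-dimensional representation `μ`, realised on the space
of `ρ` itself. -/
def twist (ρ : Representation k G V) (μ : G →* kˣ) : Representation k G V where
  toFun g := (μ g : k) • ρ g
  map_one' := by simp only [map_one, Units.val_one, one_smul]
  map_mul' g h := by simp only [map_mul, Units.val_mul, smul_mul_smul_comm]

theorem twist_apply (ρ : Representation k G V) (μ : G →* kˣ) (g : G) :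
    twist ρ μ g = (μ g : k) • ρ g := rfl

theorem character_twist (ρ : Representation k G V) (μ : G →* kˣ) (g : G) :
    (twist ρ μ).character g = μ g * ρ.character g := by
  simp only [character, twist_apply, map_smul, smul_eq_mul]

/-- The vectors on which `G` acts through the linear character `μ`. -/
noncomputable def weightSpace (ρ : Representation k G V) (μ : G →* kˣ) : Submodule k V :=
  invariants (twist ρ μ⁻¹)

variable {ρ : Representation k G V} {μ : G →* kˣ}

theorem mem_weightSpace {v : V} : v ∈ weightSpace ρ μ ↔ ∀ g, ρ g v = (μ g : k) • v := by
  simp only [weightSpace, mem_invariants, twist_apply, LinearMap.smul_apply, MonoidHom.inv_apply]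
  exact forall_congr' fun g => by rw [← Units.smul_def, inv_smul_eq_iff, Units.smul_def]

theorem finrank_weightSpace [Fintype G] [NeZero (Nat.card G : k)] [FiniteDimensional k V] :
    (Module.finrank k (weightSpace ρ μ) : k) =
      (Nat.card G : k)⁻¹ * ∑ g, ((μ g)⁻¹ : kˣ) * ρ.character g := by
  have := invertibleOfNonzero (NeZero.ne (Nat.card G : k))
  rw [weightSpace, ← card_inv_mul_sum_char_eq_finrank]
  simp only [character_twist, MonoidHom.inv_apply]

theorem weightSpace_eq_top_of_ne_bot [IsIrreducible ρ] (h : weightSpace ρ μ ≠ ⊥) :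
    weightSpace ρ μ = ⊤ :=
  eq_top_of_apply_mem (fun g _ hv => mem_weightSpace.mp hv g ▸ Submodule.smul_mem _ _ hv) h

theorem finrank_eq_one_of_weightSpace_eq_top [IsIrreducible ρ] (h : weightSpace ρ μ = ⊤) :
    Module.finrank k V = 1 := by
  have := nontrivial_of_isIrreducible ρ
  obtain ⟨v, hv⟩ := exists_ne (0 : V)
  refine (finrank_eq_one_iff_of_nonzero v hv).mpr (eq_top_of_apply_mem (ρ := ρ) (fun g w hw => ?_)
    (mt Submodule.span_singleton_eq_bot.mp hv))
  rw [mem_weightSpace.mp (h ▸ Submodule.mem_top) g]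
  exact Submodule.smul_mem _ _ hw

theorem character_eq_of_weightSpace_eq_top [IsIrreducible ρ] (h : weightSpace ρ μ = ⊤) (g : G) :
    ρ.character g = μ g := by
  have hdim := finrank_eq_one_of_weightSpace_eq_top h
  have := FiniteDimensional.of_finrank_eq_succ hdim
  have hρ : ρ g = (μ g : k) • LinearMap.id :=
    LinearMap.ext fun _ => mem_weightSpace.mp (h ▸ Submodule.mem_top) g
  rw [character, hρ, map_smul, LinearMap.trace_id, hdim, Nat.cast_one, smul_eq_mul, mul_one]

theorem exists_weightSpace_eq_top (h : Module.finrank k V = 1) :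
    ∃ μ : G →* kˣ, weightSpace ρ μ = ⊤ := by
  refine ⟨(LinearMap.det.comp ρ).toHomUnits, Submodule.eq_top_iff'.mpr fun v =>
    mem_weightSpace.mpr fun g => ?_⟩
  obtain ⟨c, hc, -⟩ := LinearMap.existsUnique_eq_smul_id_of_finrank_eq_one h (ρ g)
  have hdet : LinearMap.det (ρ g) = c := by
    rw [hc, LinearMap.det_smul, LinearMap.det_id, h, pow_one, mul_one]
  rw [MonoidHom.coe_toHomUnits, MonoidHom.comp_apply, hdet, hc]
  rfl

theorem weightSpace_comp_subtype_eq {Y N : Subgroup G} [N.Normal] (hYN : Y ⊔ N = ⊤)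
    (hρ : N ≤ ρ.ker) (hμ : N ≤ μ.ker) :
    weightSpace (ρ.comp Y.subtype) (μ.comp Y.subtype) = weightSpace ρ μ := by
  ext v
  simp only [mem_weightSpace]
  refine ⟨fun hv g => ?_, fun hv y => hv y⟩
  obtain ⟨y, hy, n, hn, rfl⟩ := Subgroup.mem_sup_of_normal_right.mp (hYN ▸ Subgroup.mem_top g)
  rw [map_mul, map_mul, hρ hn, hμ hn, mul_one, mul_one]
  exact hv ⟨y, hy⟩

theorem weightSpace_le_invariants_commutator :
    weightSpace ρ μ ≤ invariants (ρ.comp (commutator G).subtype) := by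
  intro v hv g
  refine (mem_weightSpace.mp hv g).trans ?_
  rw [MonoidHom.mem_ker.mp (Abelianization.commutator_subset_ker μ g.2), Units.val_one, one_smul]

-- Distinct characters are linearly independent (Dedekind), hence so are their weight spaces.
theorem eq_zero_of_sum_weightSpace_eq_zero {Λ : Type*} [Fintype Λ] {μ : Λ → G →* kˣ}
    (hμ : Function.Injective μ) {w : Λ → V} (hw : ∀ l, w l ∈ weightSpace ρ (μ l))
    (hsum : ∑ l, w l = 0) : w = 0 := by
  have hlin := (linearIndependent_monoidHom G k).comp (fun l => (Units.coeHom k).comp (μ l))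
    fun i j hij => hμ (MonoidHom.ext fun g => Units.ext (DFunLike.congr_fun hij g))
  funext l
  refine (Module.forall_dual_apply_eq_zero_iff k (w l)).mp fun φ => ?_
  refine Fintype.linearIndependent_iff.mp hlin (fun l => φ (w l)) (funext fun g => ?_) l
  have hg := congrArg (fun v => φ (ρ g v)) hsum
  simp only [map_sum, map_zero, mem_weightSpace.mp (hw _) g, map_smul, smul_eq_mul] at hg
  simpa [mul_comm] using hg

theorem sum_finrank_weightSpace_le [FiniteDimensional k V] {Λ : Type*} [Fintype Λ]
    {μ : Λ → G →* kˣ} (hμ : Function.Injective μ) :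
    ∑ l, Module.finrank k (weightSpace ρ (μ l)) ≤
      Module.finrank k (invariants (ρ.comp (commutator G).subtype)) := by
  classical
  let Φ : (∀ l, weightSpace ρ (μ l)) →ₗ[k] invariants (ρ.comp (commutator G).subtype) :=
    LinearMap.lsum k _ k fun _ => Submodule.inclusion weightSpace_le_invariants_commutator
  have hΦ : Function.Injective Φ := by
    refine (injective_iff_map_eq_zero Φ).mpr fun w hw => funext fun l => Subtype.ext ?_
    have hsum : ∑ l, (w l : V) = 0 := by
      simpa [Φ] using congrArg Subtype.val hw
    exact congrFun (eq_zero_of_sum_weightSpace_eq_zero hμ (fun l => (w l).2) hsum) l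
  rw [← Module.finrank_pi_fintype]
  exact LinearMap.finrank_le_finrank_of_injective hΦ

end WeightSpace

section FDRep

open Representation CategoryTheory

theorem isIrreducible_of_simple {k G : Type*} [Field k] [Group G] (V : FDRep k G) [Simple V] :
    IsIrreducible V.ρ := by
  have : Nontrivial V := by
    by_contra hV
    rw [not_nontrivial_iff_subsingleton] at hV
    exact id_nonzero V (by ext v; exact Subsingleton.elim _ _)
  refine { exists_pair_ne := ⟨⊥, ⊤, fun h => ?_⟩, eq_bot_or_eq_top := fun S => ?_ }
  · exact bot_ne_top (congrArg Subrepresentation.toSubmodule h)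
  · let ι : FDRep.of S.toRepresentation ⟶ V := FDRep.forget₂HomLinearEquiv _ _
      (Rep.ofHom (IntertwiningMap.mk S.toSubmodule.subtype fun g => rfl))
    have hι (v : S.toSubmodule) : ι v = v := rfl
    have : Mono ι := ConcreteCategory.mono_of_injective ι Subtype.val_injective
    by_cases hzero : ι = 0
    · refine .inl (Subrepresentation.toSubmodule_injective ?_)
      refine (Submodule.eq_bot_iff _).mpr fun v hv => ?_
      exact (hι ⟨v, hv⟩).symm.trans (by rw [hzero]; rfl)
    · refine .inr (Subrepresentation.toSubmodule_injective (Submodule.eq_top_iff'.mpr fun v => ?_))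
      have := isIso_of_mono_of_nonzero hzero
      have hsurj : Function.Surjective ι := (ConcreteCategory.bijective_of_isIso ι).2
      obtain ⟨w, rfl⟩ := hsurj v
      exact w.2

end FDRep

section Completeness

open Representation

variable {k G : Type*} [Field k] [Group G] [Fintype G] {f : G → k}

theorem sum_smul_comp_eq_comp_sum_smul {V : Type*} [AddCommGroup V] [Module k V]
    (hf : ∀ g h, f (h * g * h⁻¹) = f g) (ρ : Representation k G V) (x : G) :
    (∑ g, f g • ρ g) * ρ x = ρ x * ∑ g, f g • ρ g := by
  simp only [Finset.sum_mul, Finset.mul_sum, smul_mul_assoc, mul_smul_comm, ← map_mul]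
  refine Fintype.sum_equiv (MulAut.conj x⁻¹).toEquiv _ _ fun g => ?_
  rw [MulEquiv.toEquiv_eq_coe, EquivLike.coe_coe, MulAut.conj_apply, hf]
  congr 2
  group

variable [CharZero k] [IsAlgClosed k]

theorem sum_smul_eq_zero_of_isIrreducible {V : Type*} [AddCommGroup V] [Module k V]
    [FiniteDimensional k V] (hf : ∀ g h, f (h * g * h⁻¹) = f g) (ρ : Representation k G V)
    [IsIrreducible ρ] (h : ∑ g, f g * ρ.character g = 0) : ∑ g, f g • ρ g = 0 := by
  obtain ⟨c, hc⟩ := (IsIrreducible.algebraMap_intertwiningMap_bijective_of_isAlgClosed (ρ := ρ)).2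
    ⟨∑ g, f g • ρ g, sum_smul_comp_eq_comp_sum_smul hf ρ⟩
  have hscalar : ∑ g, f g • ρ g = c • LinearMap.id := by
    refine (congrArg IntertwiningMap.toLinearMap hc).symm.trans ?_
    rw [Algebra.algebraMap_eq_smul_one]
    rfl
  have htrace : c * Module.finrank k V = 0 := by
    rw [← h, ← smul_eq_mul, ← LinearMap.trace_id, ← map_smul, ← hscalar]
    simp only [map_sum, map_smul, smul_eq_mul, character]
  have := nontrivial_of_isIrreducible ρ
  have hdim : (Module.finrank k V : k) ≠ 0 := Nat.cast_ne_zero.mpr Module.finrank_pos.ne'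
  rw [hscalar, (mul_eq_zero.mp htrace).resolve_right hdim, zero_smul]

theorem sum_smul_eq_zero.{v} (hf : ∀ g h, f (h * g * h⁻¹) = f g)
    (horth : ∀ (W : Type v) [AddCommGroup W] [Module k W] [FiniteDimensional k W]
      (σ : Representation k G W) [IsIrreducible σ], ∑ g, f g * σ.character g = 0)
    {V : Type v} [AddCommGroup V] [Module k V] [FiniteDimensional k V]
    (ρ : Representation k G V) : ∑ g, f g • ρ g = 0 := by
  obtain hV | hV := subsingleton_or_nontrivial V
  · exact Subsingleton.elim _ _
  by_cases hirr : ∀ S : Subrepresentation ρ, S = ⊥ ∨ S = ⊤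
  · have : IsIrreducible ρ :=
      { exists_pair_ne := ⟨⊥, ⊤, fun h => bot_ne_top (congrArg Subrepresentation.toSubmodule h)⟩
        eq_bot_or_eq_top := hirr }
    exact sum_smul_eq_zero_of_isIrreducible hf ρ (horth V ρ)
  · push Not at hirr
    obtain ⟨S, hbot, htop⟩ := hirr
    obtain ⟨T, hST⟩ := exists_isCompl S
    have vanish (U : Subrepresentation ρ) (hU : U ≠ ⊤) :
        U.toSubmodule ≤ LinearMap.ker (∑ g, f g • ρ g) := fun v hv => by
      have _ : Module.finrank k U.toSubmodule < Module.finrank k V :=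
        Submodule.finrank_lt fun h => hU (Subrepresentation.toSubmodule_injective h)
      have hsub := congrArg Subtype.val
        (LinearMap.congr_fun (sum_smul_eq_zero hf horth U.toRepresentation) ⟨v, hv⟩)
      have hcoe (g : G) : (U.toRepresentation g ⟨v, hv⟩ : V) = ρ g v := rfl
      simpa [LinearMap.sum_apply, hcoe] using hsub
    have hT : T ≠ ⊤ := fun h => hbot (eq_bot_of_isCompl_top (h ▸ hST))
    rw [← LinearMap.ker_eq_top, eq_top_iff, ← (isCompl_toSubmodule hST).sup_eq_top]
    exact sup_le (vanish S htop) (vanish T hT)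
termination_by Module.finrank k V

theorem eq_zero_of_sum_mul_character_eq_zero.{u, v} {k : Type u} {G : Type v} [Field k] [CharZero k]
    [IsAlgClosed k] [Group G] [Fintype G] {f : G → k} (hf : ∀ g h, f (h * g * h⁻¹) = f g)
    (horth : ∀ (V : Type (max u v)) [AddCommGroup V] [Module k V] [FiniteDimensional k V]
      (ρ : Representation k G V) [IsIrreducible ρ], ∑ g, f g * ρ.character g = 0) : f = 0 := by
  classical
  have hreg := LinearMap.congr_fun
    (sum_smul_eq_zero hf horth (leftRegular k G)) (MonoidAlgebra.single 1 1)
  funext g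
  simpa [ofMulAction_single, Finsupp.single_apply] using
    congrArg (fun v : MonoidAlgebra k G => v.coeff g) hreg

end Completeness

/-- The irreducible complex characters of `G`, as a type. -/
abbrev IrrChar (G : Type) [Group G] : Type := {χ : G → ℂ // IsIrrChar G χ}

namespace IrrChar

open Representation

variable {G : Type} [Group G]

/-- A chosen simple representation affording the character `χ`. -/
noncomputable def fdRep (χ : IrrChar G) : FDRep ℂ G := χ.2.choose

/-- The action of `G` on the chosen representation affording `χ`. -/
noncomputable abbrev rep (χ : IrrChar G) : Representation ℂ G χ.fdRep := χ.fdRep.ρ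

/-- The degree `χ(1)`, as a natural number. -/
noncomputable def degree (χ : IrrChar G) : ℕ := Module.finrank ℂ χ.fdRep

instance isIrreducible_rep (χ : IrrChar G) : IsIrreducible χ.rep :=
  have : CategoryTheory.Simple χ.fdRep := χ.2.choose_spec.1
  isIrreducible_of_simple χ.fdRep

theorem character_rep (χ : IrrChar G) : χ.rep.character = χ.1 := χ.2.choose_spec.2.symm

theorem apply_one (χ : IrrChar G) : χ.1 1 = χ.degree := by
  rw [← character_rep, char_one, degree]

theorem apply_conj (χ : IrrChar G) (g h : G) : χ.1 (h * g * h⁻¹) = χ.1 g := by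
  rw [← character_rep, char_conj]

theorem degree_pos (χ : IrrChar G) : 0 < χ.degree :=
  have := nontrivial_of_isIrreducible χ.rep
  Module.finrank_pos

theorem commutator_le_ker_of_degree_le_one {χ : IrrChar G} (h : χ.degree ≤ 1) :
    commutator G ≤ χ.rep.ker :=
  commutator_le_ker_of_finrank_le_one h

/-- The multiplicity of the restriction of `μ` to `Y` in the restriction of `χ` to `Y`. -/
noncomputable def multiplicity (Y : Subgroup G) (μ : G →* ℂˣ) (χ : IrrChar G) : ℕ :=
  Module.finrank ℂ (weightSpace (χ.rep.comp Y.subtype) (μ.comp Y.subtype))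

theorem multiplicity_eq_zero {Y M : Subgroup G} [M.Normal] (hMY : M ≤ Y) {μ : G →* ℂˣ}
    (hμ : M ≤ μ.ker) {χ : IrrChar G} (hχ : ¬ M ≤ χ.rep.ker) : multiplicity Y μ χ = 0 := by
  refine Submodule.finrank_eq_zero.mpr (by_contra fun hne => hχ (le_ker_of_invariants_ne_bot
    (ne_bot_of_le_ne_bot hne fun v hv m => ?_)))
  refine (mem_weightSpace.mp hv ⟨m, hMY m.2⟩).trans ?_
  rw [MonoidHom.comp_apply, Subgroup.subtype_apply, MonoidHom.mem_ker.mp (hμ m.2), Units.val_one,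
    one_smul]

open scoped Classical in
theorem sum_mul_inv [Fintype G] (χ ψ : IrrChar G) :
    ∑ g, χ.1 g * ψ.1 g⁻¹ = if χ = ψ then (Nat.card G : ℂ) else 0 := by
  have := invertibleOfNonzero (NeZero.ne (Nat.card G : ℂ))
  have horth := char_orthonormal χ.rep ψ.rep
  simp only [character_rep, inv_mul_eq_iff_eq_mul₀ (NeZero.ne (Nat.card G : ℂ))] at horth
  rw [horth]
  split_ifs with hequiv heq heq
  · rw [mul_one]
  · obtain ⟨φ⟩ := hequiv
    exact absurd (Subtype.ext (character_rep χ ▸ character_rep ψ ▸ (char_iso φ).symm)) heq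
  · subst heq
    exact absurd ⟨Representation.Equiv.refl _⟩ hequiv
  · rw [mul_zero]

theorem eq_zero_of_sum_mul_eq_zero [Fintype G] {f : G → ℂ} (hf : ∀ g h, f (h * g * h⁻¹) = f g)
    (horth : ∀ χ : IrrChar G, ∑ g, f g * χ.1 g = 0) : f = 0 := by
  refine eq_zero_of_sum_mul_character_eq_zero hf fun V _ _ _ ρ _ => horth ⟨ρ.character, ?_⟩
  have := invertibleOfNonzero (NeZero.ne (Nat.card G : ℂ))
  refine ⟨FDRep.of ρ, (FDRep.of ρ).simple_iff_char_is_norm_one.mpr ?_, rfl⟩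
  have hnorm := char_orthonormal ρ ρ
  rw [if_pos ⟨Representation.Equiv.refl ρ⟩, inv_mul_eq_one₀ (NeZero.ne _)] at hnorm
  exact hnorm.symm

variable [Finite G]

theorem linearIndependent : LinearIndependent ℂ (Subtype.val : IrrChar G → G → ℂ) := by
  classical
  have := Fintype.ofFinite G
  refine linearIndependent_iff'.mpr fun s c hc χ hχ => ?_
  have hsum : ∑ g, (∑ ψ ∈ s, c ψ • ψ.1) g * χ.1 g⁻¹ = 0 := by
    simp only [hc, Pi.zero_apply, zero_mul, Finset.sum_const_zero]
  simp only [Finset.sum_apply, Pi.smul_apply, smul_eq_mul, Finset.sum_mul, mul_assoc] at hsum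
  rw [Finset.sum_comm] at hsum
  simpa [← Finset.mul_sum, sum_mul_inv, hχ] using hsum

noncomputable instance : Fintype (IrrChar G) :=
  have := (linearIndependent (G := G)).finite
  Fintype.ofFinite _

theorem charDegreeSum_eq : charDegreeSum G = (∑ χ : IrrChar G, χ.degree : ℕ) := by
  refine (finsum_set_coe_eq_finsum_mem _).symm.trans
    ((finsum_eq_sum_of_fintype fun χ : IrrChar G => (χ.1 1).re).trans ?_)
  rw [Nat.cast_sum]
  refine Finset.sum_congr rfl fun χ _ => ?_
  rw [apply_one, Complex.natCast_re]

open scoped Classical in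
theorem sum_degree_mul (g : G) :
    ∑ χ : IrrChar G, χ.degree * χ.1 g = if g = 1 then (Nat.card G : ℂ) else 0 := by
  have := Fintype.ofFinite G
  let f (g : G) : ℂ := ∑ χ : IrrChar G, χ.degree * χ.1 g⁻¹ - if g = 1 then (Nat.card G : ℂ) else 0
  have hf : f = 0 := by
    refine eq_zero_of_sum_mul_eq_zero (fun g h => ?_) fun ψ => ?_
    · simp only [f, conj_eq_one_iff, conj_inv, apply_conj]
    · have hψ : ∑ g, (∑ χ : IrrChar G, χ.degree * χ.1 g⁻¹) * ψ.1 g = ψ.degree * Nat.card G := calc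
        _ = ∑ χ : IrrChar G, (χ.degree : ℂ) * ∑ g, ψ.1 g * χ.1 g⁻¹ := by
          simp only [Finset.sum_mul, Finset.mul_sum]
          rw [Finset.sum_comm]
          simp only [mul_assoc, mul_comm (ψ.1 _)]
        _ = ψ.degree * Nat.card G := by simp [sum_mul_inv]
      simp only [f, sub_mul, Finset.sum_sub_distrib, hψ]
      simp [apply_one, mul_comm]
  simpa [f, sub_eq_zero] using congrFun hf g⁻¹

theorem card_conjClasses_le : Nat.card (ConjClasses G) ≤ Fintype.card (IrrChar G) := by
  classical
  have := Fintype.ofFinite G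
  let pairing : (ConjClasses G → ℂ) →ₗ[ℂ] (IrrChar G → ℂ) :=
    LinearMap.pi fun χ => ∑ g, χ.1 g • LinearMap.proj (ConjClasses.mk g)
  have hinj : Function.Injective pairing := by
    refine (injective_iff_map_eq_zero pairing).mpr fun F hF => funext fun c => ?_
    obtain ⟨g, rfl⟩ := ConjClasses.exists_rep c
    refine congrFun (eq_zero_of_sum_mul_eq_zero (f := fun g => F (ConjClasses.mk g))
      (fun g h => ?_) fun χ => ?_) g
    · exact congrArg F (ConjClasses.mk_eq_mk_iff_isConj.mpr (isConj_iff.mpr ⟨h, rfl⟩).symm)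
    · simpa [pairing, mul_comm] using congrFun hF χ
  simpa [Nat.card_eq_fintype_card] using LinearMap.finrank_le_finrank_of_injective hinj

theorem isIrrChar_of_hom (μ : G →* ℂˣ) : IsIrrChar G fun g => μ g := by
  have := Fintype.ofFinite G
  have := invertibleOfNonzero (NeZero.ne (Nat.card G : ℂ))
  have hchar (g : G) : (twist (trivial ℂ G ℂ) μ).character g = μ g := by
    rw [character_twist]
    simp [character]
  refine ⟨FDRep.of (twist (trivial ℂ G ℂ) μ), ?_, funext fun g => (hchar g).symm⟩
  refine (FDRep.simple_iff_char_is_norm_one _).mpr ?_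
  change ∑ g, (twist (trivial ℂ G ℂ) μ).character g * (twist (trivial ℂ G ℂ) μ).character g⁻¹ = _
  simp [hchar, Nat.card_eq_fintype_card]

/-- The linear character `μ`, as an irreducible character. -/
noncomputable def ofHom (μ : G →* ℂˣ) : IrrChar G := ⟨_, isIrrChar_of_hom μ⟩

theorem ofHom_injective : Function.Injective (ofHom : (G →* ℂˣ) → IrrChar G) := fun _ _ h =>
  MonoidHom.ext fun g => Units.ext (congrFun (congrArg Subtype.val h) g)

noncomputable instance : Fintype (G →* ℂˣ) :=
  have := Finite.of_injective _ (ofHom_injective (G := G))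
  Fintype.ofFinite _

theorem degree_ofHom (μ : G →* ℂˣ) : (ofHom μ).degree = 1 := by
  have h : ((ofHom μ).degree : ℂ) = 1 := by
    rw [← apply_one]
    simp [ofHom]
  exact_mod_cast h

theorem eq_ofHom_of_weightSpace_eq_top {χ : IrrChar G} {μ : G →* ℂˣ}
    (h : weightSpace χ.rep μ = ⊤) : χ = ofHom μ :=
  Subtype.ext <| funext fun g => by
    rw [← character_rep, character_eq_of_weightSpace_eq_top h]
    rfl

theorem exists_eq_ofHom {χ : IrrChar G} (h : χ.degree = 1) : ∃ μ, χ = ofHom μ :=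
  (exists_weightSpace_eq_top (ρ := χ.rep) h).imp fun _ => eq_ofHom_of_weightSpace_eq_top

theorem cast_multiplicity (Y : Subgroup G) [Fintype Y] (μ : G →* ℂˣ) (χ : IrrChar G) :
    (multiplicity Y μ χ : ℂ) = (Nat.card Y : ℂ)⁻¹ * ∑ y : Y, ((μ y)⁻¹ : ℂˣ) * χ.1 y := by
  rw [multiplicity, finrank_weightSpace, ← character_rep]
  rfl

theorem sum_degree_mul_multiplicity (Y : Subgroup G) (μ : G →* ℂˣ) :
    ∑ χ : IrrChar G, χ.degree * multiplicity Y μ χ = Y.index := by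
  classical
  have := Fintype.ofFinite Y
  have hcast : ∑ χ : IrrChar G, (χ.degree * multiplicity Y μ χ : ℂ) = Y.index := calc
    _ = (Nat.card Y : ℂ)⁻¹ * ∑ y : Y, ((μ y)⁻¹ : ℂˣ) * ∑ χ : IrrChar G, χ.degree * χ.1 y := by
      simp only [cast_multiplicity, Finset.mul_sum]
      rw [Finset.sum_comm]
      refine Finset.sum_congr rfl fun y _ => Finset.sum_congr rfl fun χ _ => ?_
      ring
    _ = (Nat.card Y : ℂ)⁻¹ * Nat.card G := by
      simp only [sum_degree_mul, OneMemClass.coe_eq_one]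
      simp
    _ = Y.index := by
      rw [← Y.card_mul_index, Nat.cast_mul, inv_mul_cancel_left₀ (NeZero.ne _)]
  exact_mod_cast hcast

theorem multiplicity_ofHom (Y : Subgroup G) (μ : G →* ℂˣ) : multiplicity Y μ (ofHom μ) = 1 := by
  have := Fintype.ofFinite Y
  have h : (multiplicity Y μ (ofHom μ) : ℂ) = 1 := by
    simp [cast_multiplicity, ofHom, Nat.card_eq_fintype_card]
  exact_mod_cast h

theorem two_mul_card_le (s : Finset (IrrChar G)) :
    2 * s.card ≤ ∑ χ ∈ s, χ.degree + Fintype.card (G →* ℂˣ) := by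
  classical
  have hlinear : (s.filter (degree · = 1)).card ≤ Fintype.card (G →* ℂˣ) := by
    refine (Finset.card_le_card (t := Finset.univ.image ofHom) fun χ hχ => ?_).trans
      Finset.card_image_le
    obtain ⟨μ, rfl⟩ := exists_eq_ofHom (Finset.mem_filter.mp hχ).2
    exact Finset.mem_image_of_mem _ (Finset.mem_univ μ)
  calc 2 * s.card = ∑ χ ∈ s, 2 := by rw [Finset.sum_const, smul_eq_mul, mul_comm]
    _ ≤ ∑ χ ∈ s, (χ.degree + if χ.degree = 1 then 1 else 0) :=
      Finset.sum_le_sum fun χ _ => by have := χ.degree_pos; split_ifs <;> lia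
    _ = ∑ χ ∈ s, χ.degree + (s.filter (degree · = 1)).card := by
      rw [Finset.sum_add_distrib, Finset.card_filter]
    _ ≤ ∑ χ ∈ s, χ.degree + Fintype.card (G →* ℂˣ) := by gcongr

theorem sum_degree_le (h : charDegreeSum G ≤ 2 * (Nat.card (ConjClasses G) : ℝ))
    (s : Finset (IrrChar G)) :
    ∑ χ ∈ s, χ.degree ≤ Fintype.card (G →* ℂˣ) + 2 * s.card := by
  classical
  rw [charDegreeSum_eq] at h
  have htotal : ∑ χ : IrrChar G, χ.degree ≤ 2 * Nat.card (ConjClasses G) := by exact_mod_cast h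
  have hclasses := card_conjClasses_le (G := G)
  have hsum := Finset.sum_add_sum_compl s degree
  have hcard := s.card_add_card_compl
  have hcompl := two_mul_card_le sᶜ
  lia

variable {M N Y : Subgroup G}

theorem multiplicity_eq_zero_of_le_ker [N.Normal] (hYN : Y ⊔ N = ⊤) {μ : G →* ℂˣ}
    (hμ : N ≤ μ.ker) {χ : IrrChar G} (hχ : N ≤ χ.rep.ker) (hne : χ ≠ ofHom μ) :
    multiplicity Y μ χ = 0 := by
  rw [multiplicity, weightSpace_comp_subtype_eq hYN hχ hμ, Submodule.finrank_eq_zero]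
  by_contra hbot
  exact hne (eq_ofHom_of_weightSpace_eq_top (weightSpace_eq_top_of_ne_bot hbot))

open scoped Classical in
theorem sum_degree_mul_multiplicity_of_not_le_ker [N.Normal] (hYN : Y ⊔ N = ⊤)
    (hN : N ≤ commutator G) (μ : G →* ℂˣ) :
    ∑ χ : IrrChar G with ¬ N ≤ χ.rep.ker, χ.degree * multiplicity Y μ χ = Y.index - 1 := by
  have htrivial : ∑ χ : IrrChar G with N ≤ χ.rep.ker, χ.degree * multiplicity Y μ χ = 1 := by
    rw [Finset.sum_eq_single (ofHom μ), degree_ofHom, multiplicity_ofHom]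
    · intro χ hχ hne
      rw [multiplicity_eq_zero_of_le_ker hYN (hN.trans (Abelianization.commutator_subset_ker μ))
        (Finset.mem_filter.mp hχ).2 hne, mul_zero]
    · intro hmem
      exact absurd (Finset.mem_filter_univ (ofHom μ) |>.mpr
        (hN.trans (commutator_le_ker_of_degree_le_one (degree_ofHom μ).le))) hmem
  rw [← sum_degree_mul_multiplicity Y μ,
    ← Finset.sum_filter_add_sum_filter_not Finset.univ fun χ : IrrChar G => N ≤ χ.rep.ker,
    htrivial, Nat.add_sub_cancel_left]

theorem commutator_le_ker_of_degree_le [N.Normal] (hYN : Y ⊔ N = ⊤) (hN : N ≤ commutator G)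
    {χ : IrrChar G} (h : χ.degree ≤ ∑ μ, multiplicity Y μ χ + 1) : ⁅Y, Y⁆ ≤ χ.rep.ker := by
  have hweights := sum_finrank_weightSpace_le (ρ := χ.rep.comp Y.subtype)
    (comp_subtype_injective_of_sup_eq_top ℂˣ hYN hN)
  have hker := commutator_le_ker_of_finrank_le (h.trans (Nat.add_le_add_right hweights 1))
  rw [← Y.map_subtype_commutator, Subgroup.map_le_iff_le_comap]
  exact hker

theorem sum_multiplicity_add_two_le (hMN : IsPerfectChiefFactor M N)
    (hY : IsNonabelianSupplement M N Y) {χ : IrrChar G} (hχ : ¬ N ≤ χ.rep.ker) :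
    ∑ μ, multiplicity Y μ χ + 2 ≤ χ.degree := by
  have := hMN.normal_top
  have := hMN.normal_bot
  by_cases hM : M ≤ χ.rep.ker
  · by_contra hlt
    have hYker := commutator_le_ker_of_degree_le hY.sup_eq_top hMN.le_commutator
      (show χ.degree ≤ ∑ μ, multiplicity Y μ χ + 1 by lia)
    have hkerN : χ.rep.ker ⊓ N = M :=
      (hMN.eq_of_normal inferInstance (le_inf hM hMN.lt.le) inf_le_right).resolve_right
        fun htop => hχ (inf_eq_right.mp htop)
    refine hY.not_commutator_le (hkerN ▸ le_inf ?_ ?_)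
    · exact (Subgroup.commutator_mono inf_le_left inf_le_left).trans hYker
    · exact (Subgroup.commutator_mono inf_le_right inf_le_right).trans hMN.commutator_eq.le
  · have hzero (μ : G →* ℂˣ) : multiplicity Y μ χ = 0 := multiplicity_eq_zero hY.le
      ((hMN.lt.le.trans hMN.le_commutator).trans (Abelianization.commutator_subset_ker μ)) hM
    have hdegree : 2 ≤ χ.degree := by
      by_contra! hlt
      exact hχ (hMN.le_commutator.trans
        (commutator_le_ker_of_degree_le_one (Nat.le_of_lt_succ hlt)))
    simpa [hzero] using hdegree

theorem image_degree_eq_singleton (hMN : IsPerfectChiefFactor M N)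
    (hY : IsNonabelianSupplement M N Y)
    (h : charDegreeSum G ≤ 2 * (Nat.card (ConjClasses G) : ℝ)) :
    degree '' {χ : IrrChar G | ¬ N ≤ χ.rep.ker ∧ 2 < χ.degree} = {Y.index - 1} := by
  classical
  have := hMN.normal_top
  have hindex : Y.index - 1 ≠ 0 := by
    have := mt Subgroup.index_eq_one.mp hY.ne_top
    have := Y.index_ne_zero_of_finite
    lia
  simpa using image_eq_singleton_of_sum_le (Λ := G →* ℂˣ)
    (s := Finset.univ.filter fun χ : IrrChar G => ¬ N ≤ χ.rep.ker) hindex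
    (fun χ hχ => sum_multiplicity_add_two_le hMN hY (Finset.mem_filter.mp hχ).2)
    (sum_degree_mul_multiplicity_of_not_le_ker hY.sup_eq_top hMN.le_commutator)
    (sum_degree_le h _)

end IrrChar

theorem solvable_of_degree_sum_le_two_mul_class_number
    (G : Type) [Group G] [Finite G]
    (h : charDegreeSum G ≤ 2 * (Nat.card (ConjClasses G) : ℝ)) :
    IsSolvable G := by
  by_contra hG
  obtain ⟨M, N, hMN⟩ := exists_isPerfectChiefFactor hG
  obtain ⟨p, hp, hpN⟩ := Nat.exists_prime_and_dvd hMN.relIndex_ne_one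
  obtain ⟨Y, hY, hYN, -⟩ := hMN.exists_supplement hp hpN
  obtain ⟨q, hq, hqY⟩ := Nat.exists_prime_and_dvd (mt Subgroup.index_eq_one.mp hY.ne_top)
  obtain ⟨Z, hZ, -, hqZ⟩ := hMN.exists_supplement hq (hqY.trans hYN)
  have hYZ : Y.index - 1 = Z.index - 1 := Set.singleton_injective <|
    (IrrChar.image_degree_eq_singleton hMN hY h).symm.trans
      (IrrChar.image_degree_eq_singleton hMN hZ h)
  have hindex : Y.index = Z.index :=
    Nat.pred_inj Y.index_ne_zero_of_finite.bot_lt Z.index_ne_zero_of_finite.bot_lt hYZ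
  exact hqZ (hindex ▸ hqY)
end
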